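/- Consider the stochastic regression model X_{n+1} = θ^t Φ_n + ε_{n+1} with least squares estimator θ̂_n. Assume (ε_n) is a martingale difference sequence with E[ε_{n+1}² | F_n] = σ² a.s. and sup_{n≥0} E[|ε_{n+1}|^a | F_n] < ∞ a.s. for some a > 2, the explosion coefficient f_n → 0 a.s., and there exists a positive random sequence (α_n) increasing to infinity and a symmetric positive definite d×d matrix L with S_n/α_n → L a.s. Let Γ_n = (1/n) Σ_{k=0}^{n-1} (X_{k+1} − θ̂_k^t Φ_k)² and Δ_n = (1/n) Σ_{k=1}^n ε_k². Then lim_{n→∞} (n/log d_n)(Γ_n − Δ_n) = σ² almost surely. -/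

import Mathlib

open MeasureTheory ProbabilityTheory Filter Finset Matrix Topology

noncomputable section

/-- `S_n = S + ∑_{k=0}^n Φ_k Φ_kᵗ`. -/
def Smat {Ω : Type*} {d : ℕ} (S : Matrix (Fin d) (Fin d) ℝ)
    (Φ : ℕ → Ω → Fin d → ℝ) (n : ℕ) (ω : Ω) : Matrix (Fin d) (Fin d) ℝ :=
  S + ∑ k ∈ Finset.range (n + 1), vecMulVec (Φ k ω) (Φ k ω)

/-- The explosion coefficient `f_n = Φ_nᵗ S_n⁻¹ Φ_n`. -/
def expl {Ω : Type*} {d : ℕ} (S : Matrix (Fin d) (Fin d) ℝ)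
    (Φ : ℕ → Ω → Fin d → ℝ) (n : ℕ) (ω : Ω) : ℝ :=
  Φ n ω ⬝ᵥ ((Smat S Φ n ω)⁻¹ *ᵥ Φ n ω)

/-- The least squares estimator `θ̂_n = S_{n-1}⁻¹ ∑_{k=1}^n Φ_{k-1} X_k`. -/
def lsq {Ω : Type*} {d : ℕ} (S : Matrix (Fin d) (Fin d) ℝ)
    (Φ : ℕ → Ω → Fin d → ℝ) (X : ℕ → Ω → ℝ) (n : ℕ) (ω : Ω) : Fin d → ℝ :=
  (Smat S Φ (n - 1) ω)⁻¹ *ᵥ ∑ k ∈ Finset.Icc 1 n, X k ω • Φ (k - 1) ω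

/-!
Write `M_n = S_{n-1} (θ̂_n - θ)` and `π_n = (θ̂_n - θ)ᵗ Φ_n`, so that the residual at time `n + 1`
is `ε_{n+1} - π_n`, and the claim becomes
`∑_{k<n} (π_k² - 2 π_k ε_{k+1}) = σ² log d_n + o(log d_n)`.
The rank one update of `S_{n-1}` gives, for `V_n = M_nᵗ S_{n-1}⁻¹ M_n` and
`f_n = 1 - d_{n-1} / d_n`, the recursion
`V_{n+1} + (1 - f_n) π_n² = V_n + 2 (1 - f_n) π_n ε_{n+1} + f_n ε_{n+1}²`. Summing it, the strong
law for martingales and `∑_{k<n} f_k ~ log d_n` give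
`V_n + ∑_{k<n} (1 - f_k) π_k² = σ² log d_n + o(log d_n)`, and `f_n → 0` removes the weights.

It remains to see that `V_n = o(log d_n)`. Since `S_n / α_n` converges to a positive definite limit,
`V_n` is comparable to `W_n = ‖M_n‖² / tr S_{n-1}`, which satisfies a recursion of the same shape,
with `f_n` replaced by `g_n = 1 - tr S_{n-1} / tr S_n` and with `g_n W_n` in place of
`(1 - f_n) π_n²`. There the strong law yields
`W_n + ∑_{k<n} g_k W_k - σ² ∑_{k<n} g_k = o(log tr S_{n-1})`. Multiplying the increments of the
left-hand side by the traces and summing by parts recovers `W_n tr S_{n-1}` up to `O(tr S_{n-1})`,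
which forces `W_n = o(log tr S_{n-1})`.
-/

/-- The Japanese bracket `⟨x⟩ = √(1 + x²)`: a smooth, `1`-Lipschitz substitute for `|x|`, used as
the Lyapunov function of the `L¹` bound for martingales with `p`-integrable increments. -/
def japaneseBracket (x : ℝ) : ℝ := √(1 + x ^ 2)

lemma japaneseBracket_sq (x : ℝ) : japaneseBracket x ^ 2 = 1 + x ^ 2 :=
  Real.sq_sqrt (by positivity)

lemma one_le_japaneseBracket (x : ℝ) : 1 ≤ japaneseBracket x :=
  Real.one_le_sqrt.2 (le_add_of_nonneg_right (sq_nonneg x))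

lemma japaneseBracket_pos (x : ℝ) : 0 < japaneseBracket x :=
  zero_lt_one.trans_le (one_le_japaneseBracket x)

lemma abs_le_japaneseBracket (x : ℝ) : |x| ≤ japaneseBracket x :=
  Real.abs_le_sqrt (by linarith)

lemma japaneseBracket_le_one_add_abs (x : ℝ) : japaneseBracket x ≤ 1 + |x| :=
  Real.sqrt_le_iff.2 ⟨by positivity, by nlinarith [sq_abs x, abs_nonneg x]⟩

lemma continuous_japaneseBracket : Continuous japaneseBracket := by
  unfold japaneseBracket
  fun_prop

lemma abs_div_japaneseBracket_le_one (x : ℝ) : |x / japaneseBracket x| ≤ 1 := by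
  rw [abs_div, abs_of_pos (japaneseBracket_pos x), div_le_one (japaneseBracket_pos x)]
  exact abs_le_japaneseBracket x

lemma continuous_div_japaneseBracket : Continuous fun x => x / japaneseBracket x :=
  continuous_id.div continuous_japaneseBracket fun x => (japaneseBracket_pos x).ne'

lemma japaneseBracket_add_le_sq (x y : ℝ) :
    japaneseBracket (x + y) ≤ japaneseBracket x + x / japaneseBracket x * y + y ^ 2 := by
  have hb := one_le_japaneseBracket x
  have hsq := japaneseBracket_sq x
  have hq := abs_le.1 (abs_div_japaneseBracket_le_one x)
  have hqb : x / japaneseBracket x * japaneseBracket x = x :=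
    div_mul_cancel₀ x (japaneseBracket_pos x).ne'
  set b := japaneseBracket x
  set q := x / b
  refine Real.sqrt_le_iff.2 ⟨?_, ?_⟩
  · nlinarith [sq_nonneg (y + q / 2)]
  · have hexpand : (b + q * y + y ^ 2) ^ 2
        = b ^ 2 + 2 * (q * b) * y + 2 * b * y ^ 2 + (q * y + y ^ 2) ^ 2 := by ring
    rw [hexpand, hqb, hsq]
    nlinarith [sq_nonneg y, sq_nonneg (q * y + y ^ 2)]

lemma japaneseBracket_add_le_abs (x y : ℝ) :
    japaneseBracket (x + y) ≤ japaneseBracket x + |y| := by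
  have hxy : x * y ≤ japaneseBracket x * |y| :=
    (le_abs_self _).trans (by rw [abs_mul]; gcongr; exact abs_le_japaneseBracket x)
  refine Real.sqrt_le_iff.2 ⟨by linarith [japaneseBracket_pos x, abs_nonneg y], ?_⟩
  nlinarith [sq_abs y, japaneseBracket_sq x]

/- For `|y| ≤ 1` the second order expansion is used and `y² ≤ |y|ᵖ`; for `|y| > 1` the Lipschitz
bound is used and `|y| ≤ |y|ᵖ`. -/
lemma japaneseBracket_add_le_rpow {p : ℝ} (hp1 : 1 ≤ p) (hp2 : p ≤ 2) (x y : ℝ) :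
    japaneseBracket (x + y) ≤
      japaneseBracket x + x / japaneseBracket x * y + 2 * |y| ^ p := by
  have hp0 : 0 ≤ |y| ^ p := by positivity
  rcases le_or_gt |y| 1 with hy | hy
  · have hsq : y ^ 2 ≤ |y| ^ p := by
      rw [← sq_abs, ← Real.rpow_two]
      exact Real.rpow_le_rpow_of_exponent_ge_of_imp (abs_nonneg y) hy hp2 fun _ h => by linarith
    linarith [japaneseBracket_add_le_sq x y]
  · have habs : |y| ≤ |y| ^ p := Real.self_le_rpow_of_one_le hy.le hp1
    have hslope : -|y| ≤ x / japaneseBracket x * y := by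
      refine neg_le_of_abs_le ?_
      rw [abs_mul]
      exact mul_le_of_le_one_left (abs_nonneg y) (abs_div_japaneseBracket_le_one x)
    linarith [japaneseBracket_add_le_abs x y]

lemma rpow_le_one_add_rpow {x q p : ℝ} (hx : 0 ≤ x) (hq : 0 ≤ q) (hqp : q ≤ p) :
    x ^ q ≤ 1 + x ^ p := by
  rcases le_total x 1 with h | h
  · linarith [Real.rpow_le_one hx h hq, Real.rpow_nonneg hx p]
  · linarith [Real.rpow_le_rpow_of_exponent_le h hqp]

lemma stronglyMeasurable_abs_rpow {Ω : Type*} {_ : MeasurableSpace Ω} {f : Ω → ℝ}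
    (hf : StronglyMeasurable f) (p : ℝ) : StronglyMeasurable fun ω => |f ω| ^ p :=
  ((hf.measurable.norm).pow_const p).stronglyMeasurable

section MartingaleDiff

variable {Ω : Type*} {m0 : MeasurableSpace Ω} {μ : Measure Ω}
  {F : Filtration ℕ m0} {D w : ℕ → Ω → ℝ} {p : ℝ}

lemma integrable_japaneseBracket [IsFiniteMeasure μ] {f : Ω → ℝ} (hf : Integrable f μ) :
    Integrable (fun ω => japaneseBracket (f ω)) μ := by
  refine ((integrable_const 1).add hf.abs).mono'
    (continuous_japaneseBracket.comp_aestronglyMeasurable hf.aestronglyMeasurable)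
    (ae_of_all _ fun ω => ?_)
  rw [Real.norm_of_nonneg (japaneseBracket_pos _).le]
  exact japaneseBracket_le_one_add_abs _

/-- `D` is a martingale difference sequence with finite absolute moments of order `p`. The index is
shifted by one with respect to the usual convention: `D n` is the increment from time `n` to time
`n + 1`, so it is `F (n + 1)`-measurable with vanishing conditional expectation given `F n`. -/
structure IsMartingaleDiff (F : Filtration ℕ m0) (D : ℕ → Ω → ℝ) (p : ℝ) (μ : Measure Ω) :
    Prop where
  stronglyMeasurable (n : ℕ) : StronglyMeasurable[F (n + 1)] (D n)
  integrable_rpow (n : ℕ) : Integrable (fun ω => |D n ω| ^ p) μ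
  condExp_eq_zero (n : ℕ) : μ[D n | F n] =ᵐ[μ] 0

namespace IsMartingaleDiff

variable [IsFiniteMeasure μ]

lemma integrable_rpow_of_le (hD : IsMartingaleDiff F D p μ) {q : ℝ} (hq : 0 ≤ q) (hqp : q ≤ p)
    (n : ℕ) : Integrable (fun ω => |D n ω| ^ q) μ := by
  refine ((integrable_const 1).add (hD.integrable_rpow n)).mono'
    (stronglyMeasurable_abs_rpow ((hD.stronglyMeasurable n).mono (F.le _)) q).aestronglyMeasurable
    (ae_of_all _ fun ω => ?_)
  rw [Real.norm_of_nonneg (by positivity)]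
  exact rpow_le_one_add_rpow (abs_nonneg _) hq hqp

lemma integrable (hD : IsMartingaleDiff F D p μ) (hp : 1 ≤ p) (n : ℕ) : Integrable (D n) μ := by
  refine (integrable_norm_iff
    ((hD.stronglyMeasurable n).mono (F.le _)).aestronglyMeasurable).1 ?_
  simpa using hD.integrable_rpow_of_le zero_le_one hp n

lemma mul_of_bound (hD : IsMartingaleDiff F D p μ) (hp : 1 ≤ p)
    (hw : ∀ n, StronglyMeasurable[F n] (w n)) {c : ℝ} (hc : ∀ n ω, |w n ω| ≤ c) :
    IsMartingaleDiff F (fun n ω => w n ω * D n ω) p μ where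
  stronglyMeasurable n := ((hw n).mono (F.mono n.le_succ)).mul (hD.stronglyMeasurable n)
  integrable_rpow n := by
    simp_rw [abs_mul, Real.mul_rpow (abs_nonneg _) (abs_nonneg _)]
    refine (hD.integrable_rpow n).bdd_mul (c := c ^ p)
      (stronglyMeasurable_abs_rpow ((hw n).mono (F.le n)) p).aestronglyMeasurable
      (ae_of_all _ fun ω => ?_)
    rw [Real.norm_of_nonneg (by positivity)]
    exact Real.rpow_le_rpow (abs_nonneg _) (hc n ω) (by linarith)
  condExp_eq_zero n := by
    refine (condExp_stronglyMeasurable_mul_of_bound (F.le n) (hw n) (hD.integrable hp n) c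
      (ae_of_all _ (hc n))).trans ?_
    filter_upwards [hD.condExp_eq_zero n] with ω hω
    simp [hω]

lemma martingale_sum (hD : IsMartingaleDiff F D p μ) (hp : 1 ≤ p) :
    Martingale (fun n ω => ∑ k ∈ range n, D k ω) F μ := by
  refine martingale_of_condExp_sub_eq_zero_nat (fun n => ?_)
    (fun n => integrable_finsetSum _ fun k _ => hD.integrable hp k) fun n => ?_
  · exact Finset.stronglyMeasurable_fun_sum _ fun k hk =>
      (hD.stronglyMeasurable k).mono (F.mono (mem_range.1 hk))
  · convert hD.condExp_eq_zero n using 2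
    ext ω
    simp [sum_range_succ]

lemma integral_mul_eq_zero (hD : IsMartingaleDiff F D p μ) (hp : 1 ≤ p) {n : ℕ} {g : Ω → ℝ}
    (hg : StronglyMeasurable[F n] g) {c : ℝ} (hc : ∀ ω, |g ω| ≤ c) :
    ∫ ω, g ω * D n ω ∂μ = 0 := by
  have hpull : μ[g * D n | F n] =ᵐ[μ] g * μ[D n | F n] :=
    condExp_stronglyMeasurable_mul_of_bound (F.le n) hg (hD.integrable hp n) c (ae_of_all _ hc)
  have hzero : μ[g * D n | F n] =ᵐ[μ] 0 := by
    filter_upwards [hpull, hD.condExp_eq_zero n] with ω hω h0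
    simp [hω, h0]
  calc ∫ ω, g ω * D n ω ∂μ = ∫ ω, (μ[g * D n | F n]) ω ∂μ := (integral_condExp (F.le n)).symm
    _ = 0 := integral_eq_zero_of_ae hzero

lemma integral_japaneseBracket_add_le (hD : IsMartingaleDiff F D p μ) (hp1 : 1 ≤ p) (hp2 : p ≤ 2)
    {n : ℕ} {f : Ω → ℝ} (hfm : StronglyMeasurable[F n] f) (hf : Integrable f μ) :
    ∫ ω, japaneseBracket (f ω + D n ω) ∂μ ≤
      ∫ ω, japaneseBracket (f ω) ∂μ + 2 * ∫ ω, |D n ω| ^ p ∂μ := by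
  have hslope : StronglyMeasurable[F n] fun ω => f ω / japaneseBracket (f ω) :=
    continuous_div_japaneseBracket.comp_stronglyMeasurable hfm
  have hcross : Integrable (fun ω => f ω / japaneseBracket (f ω) * D n ω) μ :=
    (hD.integrable hp1 n).bdd_mul (hslope.mono (F.le n)).aestronglyMeasurable
      (ae_of_all _ fun ω => abs_div_japaneseBracket_le_one (f ω))
  have hlinear := (integrable_japaneseBracket hf).fun_add hcross
  have hpow := (hD.integrable_rpow n).const_mul 2
  calc ∫ ω, japaneseBracket (f ω + D n ω) ∂μ
      ≤ ∫ ω, (japaneseBracket (f ω) + f ω / japaneseBracket (f ω) * D n ω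
          + 2 * |D n ω| ^ p) ∂μ :=
        integral_mono (integrable_japaneseBracket (hf.add (hD.integrable hp1 n)))
          (hlinear.add hpow) fun ω => japaneseBracket_add_le_rpow hp1 hp2 _ _
    _ = ∫ ω, japaneseBracket (f ω) ∂μ + 2 * ∫ ω, |D n ω| ^ p ∂μ := by
        rw [integral_add hlinear hpow, integral_add (integrable_japaneseBracket hf) hcross,
          hD.integral_mul_eq_zero hp1 hslope (fun ω => abs_div_japaneseBracket_le_one (f ω)),
          add_zero, integral_const_mul]

theorem exists_tendsto_sum_of_sum_integral_le (hD : IsMartingaleDiff F D p μ) (hp1 : 1 ≤ p)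
    (hp2 : p ≤ 2) {K : ℝ} (hK : ∀ n, ∑ k ∈ range n, ∫ ω, |D k ω| ^ p ∂μ ≤ K) :
    ∀ᵐ ω ∂μ, ∃ l, Tendsto (fun n => ∑ k ∈ range n, D k ω) atTop (𝓝 l) := by
  have hM := hD.martingale_sum hp1
  have hbracket (n : ℕ) : ∫ ω, japaneseBracket (∑ k ∈ range n, D k ω) ∂μ ≤
      ∫ _, japaneseBracket 0 ∂μ + 2 * ∑ k ∈ range n, ∫ ω, |D k ω| ^ p ∂μ := by
    induction n with
    | zero => simp
    | succ n ih =>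
      have hstep :=
        hD.integral_japaneseBracket_add_le hp1 hp2 (hM.stronglyMeasurable n) (hM.integrable n)
      simp only [sum_range_succ]
      linarith
  refine hM.submartingale.exists_ae_tendsto_of_bdd
    (R := (∫ _, japaneseBracket 0 ∂μ + 2 * K).toNNReal) fun n => ?_
  rw [eLpNorm_one_eq_lintegral_enorm, ← ofReal_integral_norm_eq_lintegral_enorm (hM.integrable n)]
  refine ENNReal.ofReal_le_ofReal ?_
  calc ∫ ω, ‖∑ k ∈ range n, D k ω‖ ∂μ
      ≤ ∫ ω, japaneseBracket (∑ k ∈ range n, D k ω) ∂μ :=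
        integral_mono (hM.integrable n).norm (integrable_japaneseBracket (hM.integrable n))
          fun ω => abs_le_japaneseBracket _
    _ ≤ _ := by linarith [hbracket n, hK n]

end IsMartingaleDiff

lemma condExp_abs_mul_rpow [IsFiniteMeasure μ] {m : MeasurableSpace Ω} (hm : m ≤ m0)
    {f g : Ω → ℝ} {c : ℝ} (hp : 0 ≤ p) (hf : StronglyMeasurable[m] f) (hc : ∀ ω, |f ω| ≤ c)
    (hg : Integrable (fun ω => |g ω| ^ p) μ) :
    μ[fun ω => |f ω * g ω| ^ p | m] =ᵐ[μ] fun ω => |f ω| ^ p * (μ[fun ω => |g ω| ^ p | m]) ω := by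
  simp_rw [abs_mul, Real.mul_rpow (abs_nonneg _) (abs_nonneg _)]
  refine condExp_stronglyMeasurable_mul_of_bound hm (stronglyMeasurable_abs_rpow hf p) hg (c ^ p)
    (ae_of_all _ fun ω => ?_)
  rw [Real.norm_of_nonneg (by positivity)]
  exact Real.rpow_le_rpow (abs_nonneg _) (hc ω) hp

lemma sum_ite_partialSum_le {c : ℕ → ℝ} (hc : ∀ n, 0 ≤ c n) {K : ℝ} (hK : 0 ≤ K) (n : ℕ) :
    ∑ k ∈ range n, (if ∑ i ∈ range (k + 1), c i ≤ K then c k else 0) ≤ K := by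
  suffices ∑ k ∈ range n, (if ∑ i ∈ range (k + 1), c i ≤ K then c k else 0) ≤
      min K (∑ k ∈ range n, c k) from this.trans (min_le_left _ _)
  induction n with
  | zero => simpa using hK
  | succ n ih =>
    obtain ⟨ihK, ihc⟩ := le_min_iff.1 ih
    rw [sum_range_succ]
    split_ifs with h
    · rw [sum_range_succ] at h ⊢
      exact le_min (by linarith) (by linarith)
    · rw [sum_range_succ]
      exact le_min (by linarith) (by linarith [hc n])

lemma IsMartingaleDiff.exists_tendsto_sum_ite_condExp_le [IsFiniteMeasure μ]
    (hD : IsMartingaleDiff F D p μ) (hp1 : 1 ≤ p) (hp2 : p ≤ 2) {K : ℝ} (hK : 0 ≤ K) :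
    ∀ᵐ ω ∂μ, ∃ l, Tendsto (fun n => ∑ k ∈ range n,
      (if ∑ i ∈ range (k + 1), (μ[fun ω => |D i ω| ^ p | F i]) ω ≤ K then 1 else 0) * D k ω)
      atTop (𝓝 l) := by
  set c : ℕ → Ω → ℝ := fun n => μ[fun ω => |D n ω| ^ p | F n]
  have hc0 : ∀ᵐ ω ∂μ, ∀ n, 0 ≤ c n ω :=
    ae_all_iff.2 fun n => condExp_nonneg (ae_of_all _ fun ω => by positivity)
  let w (n : ℕ) (ω : Ω) : ℝ := if ∑ i ∈ range (n + 1), c i ω ≤ K then 1 else 0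
  have hw (n : ℕ) : StronglyMeasurable[F n] (w n) := by
    refine StronglyMeasurable.ite (measurableSet_le ?_ measurable_const)
      stronglyMeasurable_const stronglyMeasurable_const
    exact Finset.measurable_fun_sum _ fun k hk => (stronglyMeasurable_condExp.mono
      (F.mono (Nat.lt_succ_iff.1 (mem_range.1 hk)))).measurable
  have hw1 (n : ℕ) (ω : Ω) : |w n ω| ≤ 1 := by
    simp only [w]
    split_ifs <;> simp
  have hcondExp (n : ℕ) : μ[fun ω => |w n ω * D n ω| ^ p | F n] =ᵐ[μ]
      fun ω => if ∑ i ∈ range (n + 1), c i ω ≤ K then c n ω else 0 := by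
    filter_upwards [condExp_abs_mul_rpow (F.le n) (by linarith) (hw n) (hw1 n)
      (hD.integrable_rpow n)] with ω hω
    rw [hω]
    simp only [w]
    split_ifs
    · simp [c]
    · simp [Real.zero_rpow (by linarith : p ≠ 0)]
  refine (hD.mul_of_bound hp1 hw hw1).exists_tendsto_sum_of_sum_integral_le hp1 hp2
    (K := ∫ _, K ∂μ) fun n => ?_
  calc ∑ k ∈ range n, ∫ ω, |w k ω * D k ω| ^ p ∂μ
      = ∑ k ∈ range n, ∫ ω, (μ[fun ω => |w k ω * D k ω| ^ p | F k]) ω ∂μ :=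
        sum_congr rfl fun k _ => (integral_condExp (F.le k)).symm
    _ = ∫ ω, ∑ k ∈ range n, (μ[fun ω => |w k ω * D k ω| ^ p | F k]) ω ∂μ :=
        (integral_finsetSum _ fun k _ => integrable_condExp).symm
    _ ≤ ∫ _, K ∂μ := by
        refine integral_mono_ae (integrable_finsetSum _ fun k _ => integrable_condExp)
          (integrable_const _) ?_
        filter_upwards [hc0, ae_all_iff.2 hcondExp] with ω h0 hω
        exact (sum_congr rfl fun k _ => hω k).trans_le (sum_ite_partialSum_le h0 hK n)

/- Chow's theorem: stopping the martingale before the sum of the conditional moments exceeds `K`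
leaves increments with summable moments, and almost every path is unaffected for `K` large. -/
theorem IsMartingaleDiff.exists_tendsto_sum_of_summable_condExp [IsFiniteMeasure μ]
    (hD : IsMartingaleDiff F D p μ) (hp1 : 1 ≤ p) (hp2 : p ≤ 2) :
    ∀ᵐ ω ∂μ, Summable (fun n => (μ[fun ω => |D n ω| ^ p | F n]) ω) →
      ∃ l, Tendsto (fun n => ∑ k ∈ range n, D k ω) atTop (𝓝 l) := by
  have hc0 : ∀ᵐ ω ∂μ, ∀ n, 0 ≤ (μ[fun ω => |D n ω| ^ p | F n]) ω :=
    ae_all_iff.2 fun n => condExp_nonneg (ae_of_all _ fun ω => by positivity)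
  have hstopped : ∀ᵐ ω ∂μ, ∀ K : ℕ, _ :=
    ae_all_iff.2 fun K : ℕ => hD.exists_tendsto_sum_ite_condExp_le hp1 hp2 K.cast_nonneg
  filter_upwards [hc0, hstopped] with ω h0 hlim hsum
  obtain ⟨K, hK⟩ := exists_nat_ge (∑' n, (μ[fun ω => |D n ω| ^ p | F n]) ω)
  have hle (n : ℕ) := (hsum.sum_le_tsum (range (n + 1)) fun i _ => h0 i).trans hK
  simpa [hle] using hlim K

lemma max_one_rpow_le {x q : ℝ} (hx : 0 ≤ x) : max 1 x ^ q ≤ 1 + x ^ q := by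
  rcases le_total 1 x with h | h
  · simp [max_eq_right h]
  · simpa [max_eq_left h] using Real.rpow_nonneg hx q

/-- A martingale difference sequence (indexed as in `IsMartingaleDiff`) whose conditional absolute
moments of order `p` are bounded in time, by a random constant. -/
structure IsBoundedMartingaleDiff (F : Filtration ℕ m0) (D : ℕ → Ω → ℝ) (p : ℝ) (μ : Measure Ω) :
    Prop extends IsMartingaleDiff F D p μ where
  condExp_rpow_le : ∀ᵐ ω ∂μ, ∃ C, ∀ n, (μ[fun ω => |D n ω| ^ p | F n]) ω ≤ C

namespace IsBoundedMartingaleDiff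

variable [IsFiniteMeasure μ] {e : ℕ → Ω → ℝ} {q a v : ℝ}

lemma of_abs_rpow_le (he : IsBoundedMartingaleDiff F e p μ)
    (hDm : ∀ n, StronglyMeasurable[F (n + 1)] (D n)) (hD0 : ∀ n, μ[D n | F n] =ᵐ[μ] 0)
    {c : ℝ} (hc : 0 ≤ c) (hle : ∀ n ω, |D n ω| ^ q ≤ c * (1 + |e n ω| ^ p)) :
    IsBoundedMartingaleDiff F D q μ := by
  have hdom (n : ℕ) : Integrable (fun ω => c * (1 + |e n ω| ^ p)) μ :=
    ((integrable_const 1).fun_add (he.integrable_rpow n)).const_mul c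
  have hint (n : ℕ) : Integrable (fun ω => |D n ω| ^ q) μ := by
    refine (hdom n).mono'
      (stronglyMeasurable_abs_rpow ((hDm n).mono (F.le _)) q).aestronglyMeasurable
      (ae_of_all _ fun ω => ?_)
    rw [Real.norm_of_nonneg (by positivity)]
    exact hle n ω
  have hcondExp (n : ℕ) : μ[fun ω => |D n ω| ^ q | F n] ≤ᵐ[μ]
      fun ω => c * (1 + (μ[fun ω => |e n ω| ^ p | F n]) ω) := by
    filter_upwards [condExp_mono (m := F n) (hint n) (hdom n) (ae_of_all _ (hle n)),
      condExp_smul c (fun ω => 1 + |e n ω| ^ p) (F n),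
      condExp_add (integrable_const (1 : ℝ)) (he.integrable_rpow n) (F n)] with ω hmono hsmul hadd
    rw [Pi.add_apply, condExp_const (F.le n)] at hadd
    exact hmono.trans_eq (hsmul.trans (congrArg (c * ·) hadd))
  refine ⟨⟨hDm, hint, hD0⟩, ?_⟩
  filter_upwards [he.condExp_rpow_le, ae_all_iff.2 hcondExp] with ω ⟨C, hC⟩ hω
  exact ⟨c * (1 + C), fun n => (hω n).trans (by gcongr; exact hC n)⟩

lemma mono_exponent (he : IsBoundedMartingaleDiff F e p μ) (hq : 0 ≤ q) (hqp : q ≤ p) :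
    IsBoundedMartingaleDiff F e q μ :=
  he.of_abs_rpow_le he.stronglyMeasurable he.condExp_eq_zero zero_le_one fun n ω => by
    simpa using rpow_le_one_add_rpow (abs_nonneg (e n ω)) hq hqp

lemma sq_sub_const (he : IsBoundedMartingaleDiff F e a μ) (ha : 2 ≤ a)
    (hvar : ∀ n, μ[fun ω => e n ω ^ 2 | F n] =ᵐ[μ] fun _ => v) :
    IsBoundedMartingaleDiff F (fun n ω => e n ω ^ 2 - v) (a / 2) μ := by
  refine he.of_abs_rpow_le (c := (1 + |v|) ^ (a / 2))
    (fun n => ((he.stronglyMeasurable n).pow 2).sub stronglyMeasurable_const) (fun n => ?_)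
    (by positivity) fun n ω => ?_
  · have hsq : Integrable (fun ω => e n ω ^ 2) μ := by
      simpa using he.integrable_rpow_of_le zero_le_two ha n
    filter_upwards [condExp_sub hsq (integrable_const v) (F n), hvar n] with ω hsub hω
    refine hsub.trans ?_
    simp [hω, condExp_const (F.le n)]
  · have hmax : |e n ω ^ 2 - v| ≤ (1 + |v|) * max 1 (|e n ω| ^ 2) := by
      rw [sq_abs]
      nlinarith [abs_sub (e n ω ^ 2) v, abs_of_nonneg (sq_nonneg (e n ω)), abs_nonneg v,
        le_max_left 1 (e n ω ^ 2), le_max_right 1 (e n ω ^ 2)]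
    have hpow : (|e n ω| ^ 2) ^ (a / 2) = |e n ω| ^ a := by
      rw [← Real.rpow_natCast, ← Real.rpow_mul (abs_nonneg _)]
      congr 1
      push_cast
      ring
    calc |e n ω ^ 2 - v| ^ (a / 2) ≤ ((1 + |v|) * max 1 (|e n ω| ^ 2)) ^ (a / 2) := by gcongr
      _ = (1 + |v|) ^ (a / 2) * max 1 (|e n ω| ^ 2) ^ (a / 2) :=
        Real.mul_rpow (by positivity) (by positivity)
      _ ≤ (1 + |v|) ^ (a / 2) * (1 + |e n ω| ^ a) := by
        gcongr
        exact hpow ▸ max_one_rpow_le (sq_nonneg |e n ω|)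

end IsBoundedMartingaleDiff

end MartingaleDiff

lemma sub_div_rpow_le {p x y : ℝ} (hp : 1 < p) (hx : 0 < x) (hy : 0 < y) :
    (y - x) / y ^ p ≤ (x ^ (1 - p) - y ^ (1 - p)) / (p - 1) := by
  have hratio : (p - 1) * (1 - x / y) ≤ (x / y) ^ (1 - p) - 1 := by
    have hlog := Real.log_le_sub_one_of_pos (div_pos hx hy)
    rw [Real.rpow_def_of_pos (div_pos hx hy)]
    nlinarith [Real.add_one_le_exp (Real.log (x / y) * (1 - p))]
  have hyp : 0 < y ^ (1 - p) := by positivity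
  have hlhs : (y - x) / y ^ p = y ^ (1 - p) * (1 - x / y) := by
    rw [Real.rpow_sub hy, Real.rpow_one]
    field_simp
  have hrhs : x ^ (1 - p) - y ^ (1 - p) = y ^ (1 - p) * ((x / y) ^ (1 - p) - 1) := by
    rw [Real.div_rpow hx.le hy.le]
    field_simp
  rw [hlhs, hrhs, le_div_iff₀ (by linarith)]
  nlinarith

lemma summable_sub_div_rpow {A : ℕ → ℝ} {p : ℝ} (hp : 1 < p) (hA0 : 0 < A 0) (hA : Monotone A) :
    Summable fun n => (A (n + 1) - A n) / A (n + 1) ^ p := by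
  have hpos (n : ℕ) : 0 < A n := hA0.trans_le (hA n.zero_le)
  refine summable_of_sum_range_le (c := A 0 ^ (1 - p) / (p - 1)) (fun n => ?_) fun n => ?_
  · exact div_nonneg (sub_nonneg.2 (hA n.le_succ)) (Real.rpow_nonneg (hpos _).le _)
  · calc ∑ k ∈ range n, (A (k + 1) - A k) / A (k + 1) ^ p
        ≤ ∑ k ∈ range n, (A k ^ (1 - p) - A (k + 1) ^ (1 - p)) / (p - 1) :=
          sum_le_sum fun k _ => sub_div_rpow_le hp (hpos k) (hpos (k + 1))
      _ = (A 0 ^ (1 - p) - A n ^ (1 - p)) / (p - 1) := by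
          rw [← sum_div, sum_range_sub' fun k => A k ^ (1 - p)]
      _ ≤ A 0 ^ (1 - p) / (p - 1) := by
          have := Real.rpow_nonneg (hpos n).le (1 - p)
          gcongr
          linarith

lemma summable_abs_div_rpow_mul {A w m : ℕ → ℝ} {p C : ℝ} (hp : 1 < p) (hA0 : 0 < A 0)
    (hA : Monotone A) (hw : ∀ n, |w n| ^ p ≤ A (n + 1) - A n) (hm0 : ∀ n, 0 ≤ m n)
    (hmC : ∀ n, m n ≤ C) : Summable fun n => |w n / A (n + 1)| ^ p * m n := by
  refine Summable.of_nonneg_of_le (fun n => mul_nonneg (by positivity) (hm0 n)) (fun n => ?_)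
    ((summable_sub_div_rpow hp hA0 hA).mul_right C)
  have hpos : 0 < A (n + 1) := hA0.trans_le (hA (n + 1).zero_le)
  have hincr : 0 ≤ A (n + 1) - A n := sub_nonneg.2 (hA n.le_succ)
  rw [abs_div, abs_of_pos hpos, Real.div_rpow (abs_nonneg _) hpos.le]
  exact mul_le_mul (by gcongr; exact hw n) (hmC n) (hm0 n) (by positivity)

lemma const_isLittleO_of_tendsto_atTop {f : ℕ → ℝ} (hf : Tendsto f atTop atTop) (c : ℝ) :
    (fun _ => c) =o[atTop] f :=
  Asymptotics.isLittleO_const_left.2 (Or.inr (tendsto_norm_atTop_atTop.comp hf))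

lemma sum_mul_sub_eq_sub_sum (b Y : ℕ → ℝ) (n : ℕ) :
    ∑ k ∈ range n, b (k + 1) * (Y (k + 1) - Y k) =
      b n * Y n - b 0 * Y 0 - ∑ k ∈ range n, Y k * (b (k + 1) - b k) := by
  induction n with
  | zero => simp
  | succ n ih => rw [sum_range_succ, sum_range_succ, ih]; ring

/- After summation by parts the claim reduces to `Y Δb = o(Δ(bc))`, which holds because
`c_k (b_{k+1} - b_k) ≤ b_{k+1} c_{k+1} - b_k c_k`. -/
lemma isLittleO_sum_mul_sub {b c Y : ℕ → ℝ} (hb0 : 0 ≤ b 0) (hb : Monotone b) (hc0 : 0 ≤ c 0)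
    (hc : Monotone c) (hbc : Tendsto (fun n => b n * c n) atTop atTop) (hY : Y =o[atTop] c) :
    (fun n => ∑ k ∈ range n, b (k + 1) * (Y (k + 1) - Y k)) =o[atTop] fun n => b n * c n := by
  have hbpos (n : ℕ) : 0 ≤ b n := hb0.trans (hb n.zero_le)
  have hcpos (n : ℕ) : 0 ≤ c n := hc0.trans (hc n.zero_le)
  have hincr (k : ℕ) : c k * (b (k + 1) - b k) ≤ b (k + 1) * c (k + 1) - b k * c k := by
    nlinarith [hbpos (k + 1), hc k.le_succ]
  have hincr0 (k : ℕ) : 0 ≤ c k * (b (k + 1) - b k) :=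
    mul_nonneg (hcpos k) (sub_nonneg.2 (hb k.le_succ))
  have hterm : (fun k => Y k * (b (k + 1) - b k)) =o[atTop]
      fun k => b (k + 1) * c (k + 1) - b k * c k :=
    (hY.mul_isBigO (Asymptotics.isBigO_refl _ _)).trans_isBigO <|
      Asymptotics.IsBigO.of_norm_le fun k => by
        rw [Real.norm_of_nonneg (hincr0 k)]
        exact hincr k
  have hsum : (fun n => ∑ k ∈ range n, Y k * (b (k + 1) - b k)) =o[atTop] fun n => b n * c n := by
    have := hterm.sum_range (fun k => (hincr0 k).trans (hincr k)) (by
      simp_rw [sum_range_sub (fun k => b k * c k)]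
      exact tendsto_atTop_add_const_right _ _ hbc)
    simp_rw [sum_range_sub (fun k => b k * c k)] at this
    exact this.trans_isBigO <| (Asymptotics.isBigO_refl _ _).sub
      (const_isLittleO_of_tendsto_atTop hbc _).isBigO
  simp_rw [sum_mul_sub_eq_sub_sum]
  exact (((Asymptotics.isBigO_refl b atTop).mul_isLittleO hY).sub
    (const_isLittleO_of_tendsto_atTop hbc _)).sub hsum

lemma isLittleO_sum_mul_of_tendsto_sum {b x : ℕ → ℝ} {l : ℝ} (hb0 : 0 ≤ b 0) (hb : Monotone b)
    (hbtop : Tendsto b atTop atTop) (hx : Tendsto (fun n => ∑ k ∈ range n, x k) atTop (𝓝 l)) :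
    (fun n => ∑ k ∈ range n, b (k + 1) * x k) =o[atTop] b := by
  have hY : (fun n => ∑ k ∈ range n, x k - l) =o[atTop] fun _ => (1 : ℝ) :=
    (Asymptotics.isLittleO_one_iff ℝ).2 (by simpa using hx.sub_const l)
  simpa [sum_range_succ] using
    isLittleO_sum_mul_sub hb0 hb zero_le_one monotone_const (by simpa using hbtop) hY

/- Chow's theorem applied to the normalised increments `w_n D_n / A_{n+1}`, followed by Kronecker's
lemma. -/
theorem IsBoundedMartingaleDiff.isLittleO_sum_mul {Ω : Type*} {m0 : MeasurableSpace Ω}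
    {μ : Measure Ω} [IsFiniteMeasure μ] {F : Filtration ℕ m0} {D w A : ℕ → Ω → ℝ} {p : ℝ}
    (hD : IsBoundedMartingaleDiff F D p μ) (hp1 : 1 < p) (hp2 : p ≤ 2)
    (hw : StronglyAdapted F w) (hA : IsStronglyPredictable F A) (hA0 : ∀ ω, 1 ≤ A 0 ω)
    (hwA : ∀ n ω, |w n ω| ^ p ≤ A (n + 1) ω - A n ω) :
    ∀ᵐ ω ∂μ, Tendsto (A · ω) atTop atTop →
      (fun n => ∑ k ∈ range n, w k ω * D k ω) =o[atTop] (A · ω) := by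
  have hmono (ω : Ω) : Monotone (A · ω) := monotone_nat_of_le_succ fun n => by
    linarith [hwA n ω, Real.rpow_nonneg (abs_nonneg (w n ω)) p]
  have hone (n : ℕ) (ω : Ω) : 1 ≤ A n ω := (hA0 ω).trans (hmono ω n.zero_le)
  have hpos (n : ℕ) (ω : Ω) : 0 < A n ω := zero_lt_one.trans_le (hone n ω)
  have hweight (n : ℕ) : StronglyMeasurable[F n] fun ω => w n ω / A (n + 1) ω :=
    (hw n).div (hA.measurable_add_one n)
  have hweight_le (n : ℕ) (ω : Ω) : |w n ω / A (n + 1) ω| ≤ 1 := by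
    rw [abs_div, abs_of_pos (hpos _ ω), div_le_one (hpos _ ω)]
    rcases le_total |w n ω| 1 with h | h
    · exact h.trans (hone _ ω)
    · linarith [Real.self_le_rpow_of_one_le h hp1.le, hwA n ω, hpos n ω]
  have hchow := (hD.mul_of_bound hp1.le hweight hweight_le).exists_tendsto_sum_of_summable_condExp
    hp1.le hp2
  have hcondExp : ∀ᵐ ω ∂μ, ∀ n, (μ[fun ω => |w n ω / A (n + 1) ω * D n ω| ^ p | F n]) ω =
      |w n ω / A (n + 1) ω| ^ p * (μ[fun ω => |D n ω| ^ p | F n]) ω :=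
    ae_all_iff.2 fun n => condExp_abs_mul_rpow (F.le n) (by linarith) (hweight n) (hweight_le n)
      (hD.integrable_rpow n)
  have hnonneg : ∀ᵐ ω ∂μ, ∀ n, 0 ≤ (μ[fun ω => |D n ω| ^ p | F n]) ω :=
    ae_all_iff.2 fun n => condExp_nonneg (ae_of_all _ fun ω => by positivity)
  filter_upwards [hchow, hcondExp, hnonneg, hD.condExp_rpow_le]
    with ω hconv hmom hmom0 ⟨C, hC⟩ htop
  have hsummable : Summable fun n => (μ[fun ω => |w n ω / A (n + 1) ω * D n ω| ^ p | F n]) ω := by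
    simp_rw [hmom]
    exact summable_abs_div_rpow_mul (A := (A · ω)) (w := (w · ω)) hp1 (hpos 0 ω) (hmono ω)
      (hwA · ω) hmom0 hC
  obtain ⟨l, hl⟩ := hconv hsummable
  refine (isLittleO_sum_mul_of_tendsto_sum (hpos 0 ω).le (hmono ω) htop hl).congr_left fun n => ?_
  refine sum_congr rfl fun k _ => ?_
  rw [← mul_assoc, mul_div_cancel₀ _ (hpos _ ω).ne']

lemma one_sub_div_le_log_sub_log {x y : ℝ} (hx : 0 < x) (hy : 0 < y) :
    1 - x / y ≤ Real.log y - Real.log x := by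
  simpa [Real.log_div hy.ne' hx.ne'] using Real.one_sub_inv_le_log_of_pos (div_pos hy hx)

lemma sum_one_sub_div_le_log_sub_log {d : ℕ → ℝ} (hd : ∀ n, 0 < d n) (n : ℕ) :
    ∑ k ∈ range n, (1 - d k / d (k + 1)) ≤ Real.log (d n) - Real.log (d 0) :=
  (sum_le_sum fun k _ => one_sub_div_le_log_sub_log (hd k) (hd (k + 1))).trans_eq
    (sum_range_sub (fun k => Real.log (d k)) n)

lemma one_sub_div_nonneg_of_monotone {d : ℕ → ℝ} (hdm : Monotone d) (hd : ∀ n, 0 < d n) (n : ℕ) :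
    0 ≤ 1 - d n / d (n + 1) :=
  sub_nonneg.2 ((div_le_one (hd _)).2 (hdm n.le_succ))

lemma isLittleO_sum_one_sub_div_sub_log {d : ℕ → ℝ} (hd : ∀ n, 0 < d n) (hdm : Monotone d)
    (hratio : Tendsto (fun n => 1 - d n / d (n + 1)) atTop (𝓝 0)) (htop : Tendsto d atTop atTop) :
    (fun n => ∑ k ∈ range n, (1 - d k / d (k + 1)) - Real.log (d n)) =o[atTop]
      fun n => Real.log (d n) := by
  have hlogtop : Tendsto (fun n => Real.log (d n)) atTop atTop := Real.tendsto_log_atTop.comp htop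
  have htaylor : (fun n => (1 - d n / d (n + 1)) - (Real.log (d (n + 1)) - Real.log (d n)))
      =o[atTop] fun n => 1 - d n / d (n + 1) := by
    have hone : Tendsto (fun n => d n / d (n + 1)) atTop (𝓝 1) := by
      simpa using hratio.const_sub 1
    have hderiv := (hasDerivAt_iff_isLittleO.1 (Real.hasDerivAt_log one_ne_zero)).comp_tendsto hone
    refine (hderiv.neg_right.congr_left fun n => ?_).congr_right fun n => ?_
    · simp only [Function.comp_apply, Real.log_div (hd n).ne' (hd (n + 1)).ne', Real.log_one,
        inv_one, smul_eq_mul]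
      ring
    · simp
  have hlog : (fun n => 1 - d n / d (n + 1)) =O[atTop]
      fun n => Real.log (d (n + 1)) - Real.log (d n) := by
    simpa only [sub_sub_cancel] using htaylor.right_isBigO_sub
  have htelescope (n : ℕ) := sum_range_sub (fun k => Real.log (d k)) n
  have hsum := (htaylor.trans_isBigO hlog).sum_range
    (fun n => sub_nonneg.2 (Real.log_le_log (hd n) (hdm n.le_succ)))
    (by simp_rw [htelescope]; exact tendsto_atTop_add_const_right _ _ hlogtop)
  simp_rw [sum_sub_distrib (fun n => 1 - d n / d (n + 1)), htelescope] at hsum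
  have hconst := const_isLittleO_of_tendsto_atTop hlogtop (Real.log (d 0))
  refine ((hsum.trans_isBigO ((Asymptotics.isBigO_refl _ _).sub hconst.isBigO)).sub
    hconst).congr_left fun n => ?_
  ring

lemma isEquivalent_log_succ {d : ℕ → ℝ} (hd : ∀ n, 0 < d n)
    (hratio : Tendsto (fun n => 1 - d n / d (n + 1)) atTop (𝓝 0)) (htop : Tendsto d atTop atTop) :
    Asymptotics.IsEquivalent atTop (fun n => Real.log (d (n + 1))) fun n => Real.log (d n) := by
  have hone : Tendsto (fun n => d n / d (n + 1)) atTop (𝓝 1) := by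
    simpa using hratio.const_sub 1
  have hdiff : Tendsto (fun n => Real.log (d (n + 1)) - Real.log (d n)) atTop (𝓝 0) := by
    have := (hone.log one_ne_zero).neg
    simpa [Real.log_div (hd _).ne' (hd _).ne'] using this
  exact ((Asymptotics.isLittleO_one_iff ℝ).2 hdiff).trans
    (const_isLittleO_of_tendsto_atTop (Real.tendsto_log_atTop.comp htop) 1)

lemma isBigO_of_le_add_isLittleO {U g R : ℕ → ℝ} (hU : ∀ n, 0 ≤ U n) (hR : R =o[atTop] U)
    (h : ∀ n, U n ≤ g n + R n) : U =O[atTop] g := by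
  refine Asymptotics.IsBigO.of_bound 2 ?_
  filter_upwards [hR.bound one_half_pos] with n hn
  rw [Real.norm_of_nonneg (hU n)] at hn ⊢
  linarith [h n, (abs_le.1 hn).2, Real.le_norm_self (g n)]

/-- The clock `1 + log (d_n / d_0) + ∑_{k<n} u_k²` against which the martingale terms of the
Lyapunov recursion `V_{n+1} + r_n = V_n + 2 u_n e_n + (1 - d_n / d_{n+1}) e_n²` are measured. -/
def lyapunovClock (d u : ℕ → ℝ) (n : ℕ) : ℝ :=
  1 + (Real.log (d n) - Real.log (d 0)) + ∑ k ∈ range n, u k ^ 2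

section LyapunovClock

variable {d u : ℕ → ℝ}

lemma lyapunovClock_succ_sub (n : ℕ) : lyapunovClock d u (n + 1) - lyapunovClock d u n =
    Real.log (d (n + 1)) - Real.log (d n) + u n ^ 2 := by
  simp only [lyapunovClock, sum_range_succ]
  ring

lemma sq_le_lyapunovClock_succ_sub (hd : ∀ n, 0 < d n) (hdm : Monotone d) (n : ℕ) :
    u n ^ 2 ≤ lyapunovClock d u (n + 1) - lyapunovClock d u n := by
  rw [lyapunovClock_succ_sub]
  linarith [Real.log_le_log (hd n) (hdm n.le_succ)]

lemma one_sub_div_rpow_le_lyapunovClock_succ_sub (hd : ∀ n, 0 < d n) (hdm : Monotone d)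
    {p : ℝ} (hp : 1 ≤ p) (n : ℕ) :
    |1 - d n / d (n + 1)| ^ p ≤ lyapunovClock d u (n + 1) - lyapunovClock d u n := by
  have hf0 := one_sub_div_nonneg_of_monotone hdm hd n
  have hf1 : 1 - d n / d (n + 1) ≤ 1 := by linarith [div_pos (hd n) (hd (n + 1))]
  rw [lyapunovClock_succ_sub, abs_of_nonneg hf0]
  linarith [Real.rpow_le_self_of_le_one hf0 hf1 hp, sq_nonneg (u n),
    one_sub_div_le_log_sub_log (hd n) (hd (n + 1))]

lemma one_le_lyapunovClock (hd : ∀ n, 0 < d n) (hdm : Monotone d) (n : ℕ) :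
    1 ≤ lyapunovClock d u n := by
  have := Real.log_le_log (hd 0) (hdm n.zero_le)
  have : 0 ≤ ∑ k ∈ range n, u k ^ 2 := sum_nonneg fun k _ => sq_nonneg (u k)
  unfold lyapunovClock
  linarith

lemma tendsto_lyapunovClock (htop : Tendsto d atTop atTop) :
    Tendsto (lyapunovClock d u) atTop atTop :=
  (tendsto_atTop_add_const_left _ 1 (tendsto_atTop_add_const_right _ _
    (Real.tendsto_log_atTop.comp htop))).atTop_add_nonneg
    fun _ => sum_nonneg fun k _ => sq_nonneg (u k)

lemma isBigO_lyapunovClock_log (hd : ∀ n, 0 < d n) (hdm : Monotone d)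
    {R : ℕ → ℝ} {C : ℝ} (htop : Tendsto d atTop atTop)
    (hR : R =o[atTop] lyapunovClock d u)
    (hu : ∀ n, ∑ k ∈ range n, u k ^ 2 ≤ C * (Real.log (d n) - Real.log (d 0)) + R n) :
    lyapunovClock d u =O[atTop] fun n => Real.log (d n) := by
  have hconst (c : ℝ) := const_isLittleO_of_tendsto_atTop (Real.tendsto_log_atTop.comp htop) c
  have hlog : (fun n => 1 + (1 + C) * (Real.log (d n) - Real.log (d 0))) =O[atTop]
      fun n => Real.log (d n) :=
    (hconst 1).isBigO.add
      (((Asymptotics.isBigO_refl _ _).sub (hconst _).isBigO).const_mul_left (1 + C))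
  refine (isBigO_of_le_add_isLittleO
    (fun n => zero_le_one.trans (one_le_lyapunovClock hd hdm n)) hR fun n => ?_).trans hlog
  have := hu n
  unfold lyapunovClock
  linarith

lemma isLittleO_log_of_lyapunov_step (hd : ∀ n, 0 < d n) (hdm : Monotone d)
    {V r e : ℕ → ℝ} {v : ℝ} (htop : Tendsto d atTop atTop)
    (hV : ∀ n, 0 ≤ V n) (hur : ∀ n, u n ^ 2 ≤ r n)
    (hstep : ∀ n, V (n + 1) + r n =
      V n + 2 * (u n * e n) + (1 - d n / d (n + 1)) * e n ^ 2)
    (hlin : (fun n => ∑ k ∈ range n, u k * e k) =o[atTop] lyapunovClock d u)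
    (hquad : (fun n => ∑ k ∈ range n, (1 - d k / d (k + 1)) * (e k ^ 2 - v)) =o[atTop]
      lyapunovClock d u) :
    (fun n => V n + ∑ k ∈ range n, r k - v * ∑ k ∈ range n, (1 - d k / d (k + 1))) =o[atTop]
      fun n => Real.log (d n) := by
  have hunroll (n : ℕ) : V n + ∑ k ∈ range n, r k - v * ∑ k ∈ range n, (1 - d k / d (k + 1)) =
      V 0 + 2 * ∑ k ∈ range n, u k * e k
        + ∑ k ∈ range n, (1 - d k / d (k + 1)) * (e k ^ 2 - v) := by
    induction n with
    | zero => simp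
    | succ n ih => simp only [sum_range_succ]; linarith [hstep n]
  have hremainder : (fun n => V n + ∑ k ∈ range n, r k
      - v * ∑ k ∈ range n, (1 - d k / d (k + 1))) =o[atTop] lyapunovClock d u := by
    simp_rw [hunroll]
    exact ((const_isLittleO_of_tendsto_atTop (tendsto_lyapunovClock htop) _).add
      (hlin.const_mul_left 2)).add hquad
  refine hremainder.trans_isBigO
    (isBigO_lyapunovClock_log (C := |v|) hd hdm htop hremainder fun n => ?_)
  have hsum0 : 0 ≤ ∑ k ∈ range n, (1 - d k / d (k + 1)) :=
    sum_nonneg fun k _ => one_sub_div_nonneg_of_monotone hdm hd k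
  have hvsum : v * ∑ k ∈ range n, (1 - d k / d (k + 1)) ≤
      |v| * (Real.log (d n) - Real.log (d 0)) :=
    mul_le_mul (le_abs_self v) (sum_one_sub_div_le_log_sub_log hd n) hsum0 (abs_nonneg v)
  linarith [hV n, sum_le_sum fun k (_ : k ∈ range n) => hur k]

end LyapunovClock

section LyapunovMartingale

variable {Ω : Type*} {m0 : MeasurableSpace Ω} {μ : Measure Ω} [IsFiniteMeasure μ]
  {F : Filtration ℕ m0} {d u V r e : ℕ → Ω → ℝ} {p v : ℝ}

lemma isStronglyPredictable_lyapunovClock (hdF : IsStronglyPredictable F d)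
    (hu : StronglyAdapted F u) :
    IsStronglyPredictable F fun n ω => lyapunovClock (d · ω) (u · ω) n := by
  have hlog {m : MeasurableSpace Ω} {n : ℕ} (h : StronglyMeasurable[m] (d n)) :
      StronglyMeasurable[m] fun ω => Real.log (d n ω) := h.measurable.log.stronglyMeasurable
  refine IsStronglyPredictable.iff_measurable_add_one.2 ⟨?_, fun n => ?_⟩
  · simpa [lyapunovClock] using stronglyMeasurable_const
  · refine (stronglyMeasurable_const.add ((hlog (hdF.measurable_add_one n)).sub
      ((hlog (hdF.stronglyAdapted 0)).mono (F.mono n.zero_le)))).add ?_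
    exact Finset.stronglyMeasurable_fun_sum _ fun k hk =>
      ((hu k).mono (F.mono (Nat.lt_succ_iff.1 (mem_range.1 hk)))).pow 2

lemma IsBoundedMartingaleDiff.isLittleO_sum_mul_lyapunovClock
    (he : IsBoundedMartingaleDiff F e 2 μ) (hdF : IsStronglyPredictable F d)
    (hd : ∀ n ω, 0 < d n ω) (hdm : ∀ ω, Monotone (d · ω)) (hu : StronglyAdapted F u) :
    ∀ᵐ ω ∂μ, Tendsto (d · ω) atTop atTop →
      (fun n => ∑ k ∈ range n, u k ω * e k ω) =o[atTop] lyapunovClock (d · ω) (u · ω) := by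
  filter_upwards [he.isLittleO_sum_mul one_lt_two le_rfl hu
    (isStronglyPredictable_lyapunovClock hdF hu)
    (fun ω => one_le_lyapunovClock (hd · ω) (hdm ω) 0)
    (fun n ω => by simpa using sq_le_lyapunovClock_succ_sub (u := (u · ω)) (hd · ω) (hdm ω) n)]
    with ω hω htop using hω (tendsto_lyapunovClock htop)

theorem IsBoundedMartingaleDiff.isLittleO_log_of_lyapunov
    (he : IsBoundedMartingaleDiff F e 2 μ)
    (hsq : IsBoundedMartingaleDiff F (fun n ω => e n ω ^ 2 - v) p μ) (hp1 : 1 < p) (hp2 : p ≤ 2)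
    (hdF : IsStronglyPredictable F d) (hd : ∀ n ω, 0 < d n ω) (hdm : ∀ ω, Monotone (d · ω))
    (hu : StronglyAdapted F u) (hV : ∀ n ω, 0 ≤ V n ω) (hur : ∀ n ω, u n ω ^ 2 ≤ r n ω)
    (hstep : ∀ n ω, V (n + 1) ω + r n ω =
      V n ω + 2 * (u n ω * e n ω) + (1 - d n ω / d (n + 1) ω) * e n ω ^ 2) :
    ∀ᵐ ω ∂μ, Tendsto (d · ω) atTop atTop →
      (fun n => V n ω + ∑ k ∈ range n, r k ω
        - v * ∑ k ∈ range n, (1 - d k ω / d (k + 1) ω)) =o[atTop] fun n => Real.log (d n ω) := by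
  have hf : StronglyAdapted F fun n ω => 1 - d n ω / d (n + 1) ω := fun n =>
    stronglyMeasurable_const.sub ((hdF.stronglyAdapted n).div (hdF.measurable_add_one n))
  filter_upwards [he.isLittleO_sum_mul_lyapunovClock hdF hd hdm hu,
    hsq.isLittleO_sum_mul hp1 hp2 hf (isStronglyPredictable_lyapunovClock hdF hu)
      (fun ω => one_le_lyapunovClock (hd · ω) (hdm ω) 0)
      fun n ω => one_sub_div_rpow_le_lyapunovClock_succ_sub (hd · ω) (hdm ω) hp1.le n]
    with ω hlin hquad htop
  exact isLittleO_log_of_lyapunov_step (hd · ω) (hdm ω) htop (hV · ω) (hur · ω) (hstep · ω)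
    (hlin htop) (hquad (tendsto_lyapunovClock htop))

end LyapunovMartingale

lemma isLittleO_log_of_isLittleO_add_sum {t W : ℕ → ℝ} {v : ℝ} (ht : ∀ n, 0 < t n)
    (htm : Monotone t) (htop : Tendsto t atTop atTop)
    (h : (fun n => W n + ∑ k ∈ range n, (1 - t k / t (k + 1)) * W k
      - v * ∑ k ∈ range n, (1 - t k / t (k + 1))) =o[atTop] fun n => Real.log (t n)) :
    W =o[atTop] fun n => Real.log (t n) := by
  have hconst (c : ℝ) := const_isLittleO_of_tendsto_atTop (Real.tendsto_log_atTop.comp htop) c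
  set Y : ℕ → ℝ := fun n => W n + ∑ k ∈ range n, (1 - t k / t (k + 1)) * W k
    - v * ∑ k ∈ range n, (1 - t k / t (k + 1)) with hY
  have hsum (n : ℕ) : t n * W n = ∑ k ∈ range n, t (k + 1) * (Y (k + 1) - Y k)
      + (t 0 * W 0 + v * (t n - t 0)) := by
    induction n with
    | zero => simp
    | succ n ih =>
      have := (ht (n + 1)).ne'
      rw [sum_range_succ, add_right_comm, ← sub_eq_iff_eq_add.2 ih]
      simp only [hY, sum_range_succ]
      field_simp
      ring
  have hscale : (fun n => Real.log (t n)) =O[atTop] fun n => Real.log (t n) - Real.log (t 0) :=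
    (hconst (Real.log (t 0))).right_isBigO_sub
  have hscale' : (fun n => Real.log (t n) - Real.log (t 0)) =O[atTop] fun n => Real.log (t n) :=
    (Asymptotics.isBigO_refl _ _).sub (hconst _).isBigO
  have habel := isLittleO_sum_mul_sub (ht 0).le htm (sub_self _).ge
    (fun _ _ hmn => sub_le_sub_right (Real.log_le_log (ht _) (htm hmn)) _)
    (htop.atTop_mul_atTop₀ (tendsto_atTop_add_const_right _ _ (Real.tendsto_log_atTop.comp htop)))
    (h.trans_isBigO hscale)
  have hrest : (fun n => t 0 * W 0 + v * (t n - t 0)) =o[atTop]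
      fun n => t n * Real.log (t n) := by
    have hone : t =o[atTop] fun n => t n * Real.log (t n) :=
      ((Asymptotics.isBigO_refl t atTop).mul_isLittleO (hconst 1)).congr_left fun n => mul_one _
    have hconst' (c : ℝ) := (const_isLittleO_of_tendsto_atTop htop c).trans hone
    exact (hconst' _).add ((hone.sub (hconst' _)).const_mul_left v)
  have hprod : (fun n => t n * W n) =o[atTop] fun n => t n * Real.log (t n) :=
    ((habel.trans_isBigO ((Asymptotics.isBigO_refl t _).mul hscale')).add hrest).congr_left
      fun n => (hsum n).symm
  refine ((Asymptotics.isBigO_refl (fun n => (t n)⁻¹) atTop).mul_isLittleO hprod).congr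
    (fun n => ?_) fun n => ?_
  all_goals exact inv_mul_cancel_left₀ (ht n).ne' _

lemma isLittleO_sum_of_isBigO_sum {f g c : ℕ → ℝ} (hfg : f =o[atTop] g) (hg : ∀ n, 0 ≤ g n)
    (hcm : Monotone c) (hc : Tendsto c atTop atTop)
    (hgc : (fun n => ∑ k ∈ range n, g k) =O[atTop] c) :
    (fun n => ∑ k ∈ range n, f k) =o[atTop] c := by
  have hstep (n : ℕ) : 0 ≤ c (n + 1) - c n := sub_nonneg.2 (hcm n.le_succ)
  have hsum (n : ℕ) : ∑ k ∈ range n, (g k + (c (k + 1) - c k)) =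
      ∑ k ∈ range n, g k + (c n - c 0) := by rw [sum_add_distrib, sum_range_sub]
  have hle : g =O[atTop] fun n => g n + (c (n + 1) - c n) :=
    Asymptotics.isBigO_of_le _ fun n => by
      rw [Real.norm_of_nonneg (hg n), Real.norm_of_nonneg (add_nonneg (hg n) (hstep n))]
      exact le_add_of_nonneg_right (hstep n)
  refine ((hfg.trans_isBigO hle).sum_range
    (fun n => add_nonneg (hg n) (hstep n)) ?_).trans_isBigO ?_
  · simp_rw [hsum]
    exact (tendsto_atTop_add_const_right _ _ hc).nonneg_add_atTop
      fun n => sum_nonneg fun k _ => hg k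
  · simp_rw [hsum]
    exact hgc.add ((Asymptotics.isBigO_refl _ _).sub (const_isLittleO_of_tendsto_atTop hc _).isBigO)

lemma isLittleO_sum_sq_sub_log {d q V : ℕ → ℝ} {v : ℝ} (hd : ∀ n, 0 < d n)
    (hdm : Monotone d) (hratio : Tendsto (fun n => 1 - d n / d (n + 1)) atTop (𝓝 0))
    (htop : Tendsto d atTop atTop) (hV : V =o[atTop] fun n => Real.log (d n))
    (h : (fun n => V n + ∑ k ∈ range n, d k / d (k + 1) * q k ^ 2
      - v * ∑ k ∈ range n, (1 - d k / d (k + 1))) =o[atTop] fun n => Real.log (d n)) :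
    (fun n => ∑ k ∈ range n, q k ^ 2 - v * Real.log (d n)) =o[atTop]
      fun n => Real.log (d n) := by
  have hweighted : (fun n => ∑ k ∈ range n, d k / d (k + 1) * q k ^ 2 - v * Real.log (d n))
      =o[atTop] fun n => Real.log (d n) :=
    ((h.sub hV).add ((isLittleO_sum_one_sub_div_sub_log hd hdm hratio htop).const_mul_left
      v)).congr_left fun n => by ring
  have hweightedO : (fun n => ∑ k ∈ range n, d k / d (k + 1) * q k ^ 2) =O[atTop]
      fun n => Real.log (d n) :=
    (hweighted.isBigO.add ((Asymptotics.isBigO_refl _ _).const_mul_left v)).congr_left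
      fun n => sub_add_cancel _ _
  have hone : Tendsto (fun n => d n / d (n + 1)) atTop (𝓝 1) := by
    simpa using hratio.const_sub 1
  have hdefect : (fun n => (1 - d n / d (n + 1)) * q n ^ 2) =o[atTop]
      fun n => d n / d (n + 1) * q n ^ 2 := by
    refine Asymptotics.IsLittleO.mul_isBigO ?_ (Asymptotics.isBigO_refl _ _)
    exact ((Asymptotics.isLittleO_one_iff ℝ).2 hratio).trans_isBigO
      ((Asymptotics.isEquivalent_const_iff_tendsto one_ne_zero).2 hone).isBigO_symm
  have hdefectSum := isLittleO_sum_of_isBigO_sum hdefect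
    (fun n => mul_nonneg (div_pos (hd n) (hd _)).le (sq_nonneg _))
    (fun _ _ hij => Real.log_le_log (hd _) (hdm hij)) (Real.tendsto_log_atTop.comp htop) hweightedO
  refine (hweighted.add hdefectSum).congr_left fun n => ?_
  rw [sub_add_eq_add_sub, ← sum_add_distrib]
  congr 1
  exact sum_congr rfl fun k _ => by ring

lemma tendsto_sum_sq_sub_div_log {d q e : ℕ → ℝ} {v : ℝ} (hd : ∀ n, 0 < d n)
    (hratio : Tendsto (fun n => 1 - d n / d (n + 1)) atTop (𝓝 0)) (htop : Tendsto d atTop atTop)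
    (hsq : (fun n => ∑ k ∈ range n, q k ^ 2 - v * Real.log (d n)) =o[atTop]
      fun n => Real.log (d n))
    (hlin : (fun n => ∑ k ∈ range n, q k * e k) =o[atTop] lyapunovClock d q) :
    Tendsto (fun n => (∑ k ∈ range n, (q k ^ 2 - 2 * (q k * e k))) / Real.log (d (n + 1)))
      atTop (𝓝 v) := by
  have hconst (c : ℝ) := const_isLittleO_of_tendsto_atTop (Real.tendsto_log_atTop.comp htop) c
  have hlog := Asymptotics.isBigO_refl (fun n => Real.log (d n)) atTop
  have hsqO : (fun n => ∑ k ∈ range n, q k ^ 2) =O[atTop] fun n => Real.log (d n) :=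
    (hsq.isBigO.add (hlog.const_mul_left v)).congr_left fun n => sub_add_cancel _ _
  have hclock : lyapunovClock d q =O[atTop] fun n => Real.log (d n) :=
    ((hconst 1).isBigO.add (hlog.sub (hconst _).isBigO)).add hsqO
  have hremainder : (fun n => ∑ k ∈ range n, (q k ^ 2 - 2 * (q k * e k)) - v * Real.log (d n))
      =o[atTop] fun n => Real.log (d n) :=
    (hsq.sub ((hlin.trans_isBigO hclock).const_mul_left 2)).congr_left fun n => by
      rw [sum_sub_distrib, mul_sum, sub_right_comm]
  have hequiv := isEquivalent_log_succ hd hratio htop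
  have hone : Tendsto (fun n => Real.log (d n) / Real.log (d (n + 1))) atTop (𝓝 1) :=
    (Asymptotics.isEquivalent_iff_tendsto_one (((Real.tendsto_log_atTop.comp htop).comp
      (tendsto_add_atTop_nat 1)).eventually_ne_atTop 0)).1 hequiv.symm
  have hlim := (hremainder.trans_isBigO hequiv.isBigO_symm).tendsto_div_nhds_zero.add
    (hone.const_mul v)
  rw [zero_add, mul_one] at hlim
  refine hlim.congr fun n => ?_
  ring

section RankOneUpdate

variable {ι K : Type*} [Fintype ι] [DecidableEq ι] [Field K]

lemma dotProduct_inv_add_vecMulVec_mulVec {A : Matrix ι ι K} {x y : ι → K}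
    (h : IsUnit (A + vecMulVec x y).det) :
    y ⬝ᵥ ((A + vecMulVec x y)⁻¹ *ᵥ x) = 1 - A.det / (A + vecMulVec x y).det := by
  set B := A + vecMulVec x y with hB
  have hfactor : A = B * (1 + replicateCol Unit (-(B⁻¹ *ᵥ x)) * replicateRow Unit y) := by
    rw [← Matrix.vecMulVec_eq, Matrix.mul_add, Matrix.mul_one, Matrix.mul_vecMulVec,
      Matrix.mulVec_neg, Matrix.mulVec_mulVec, Matrix.mul_nonsing_inv _ h, Matrix.one_mulVec,
      Matrix.neg_vecMulVec, hB]
    abel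
  have hdet : A.det = B.det * (1 - y ⬝ᵥ (B⁻¹ *ᵥ x)) := by
    conv_lhs => rw [hfactor]
    rw [Matrix.det_mul, Matrix.det_one_add_replicateCol_mul_replicateRow, dotProduct_neg,
      ← sub_eq_add_neg]
  rw [hdet, mul_div_cancel_left₀ _ h.ne_zero, sub_sub_cancel]

lemma inv_add_vecMulVec_mulVec_add_smul {A : Matrix ι ι K} {x y : ι → K} (m : ι → K) (e : K)
    (hA : IsUnit A.det) (hB : IsUnit (A + vecMulVec x y).det) :
    (A + vecMulVec x y)⁻¹ *ᵥ (m + e • x) =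
      A⁻¹ *ᵥ m + (e - y ⬝ᵥ (A⁻¹ *ᵥ m)) • ((A + vecMulVec x y)⁻¹ *ᵥ x) := by
  have hpreimage : m + e • x =
      (A + vecMulVec x y) *ᵥ (A⁻¹ *ᵥ m) + (e - y ⬝ᵥ (A⁻¹ *ᵥ m)) • x := by
    rw [Matrix.add_mulVec, Matrix.mulVec_mulVec, Matrix.mul_nonsing_inv _ hA, Matrix.one_mulVec,
      Matrix.vecMulVec_mulVec, op_smul_eq_smul, sub_smul]
    abel
  rw [hpreimage, Matrix.mulVec_add, Matrix.mulVec_mulVec, Matrix.nonsing_inv_mul _ hB,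
    Matrix.one_mulVec, Matrix.mulVec_smul]

lemma dotProduct_inv_add_vecMulVec_self_mulVec {A : Matrix ι ι K} {x : ι → K} (m : ι → K) (e : K)
    (hsymm : A.IsSymm) (hA : IsUnit A.det) (hB : IsUnit (A + vecMulVec x x).det) :
    (m + e • x) ⬝ᵥ ((A + vecMulVec x x)⁻¹ *ᵥ (m + e • x))
        + A.det / (A + vecMulVec x x).det * (x ⬝ᵥ (A⁻¹ *ᵥ m)) ^ 2 =
      m ⬝ᵥ (A⁻¹ *ᵥ m) + 2 * (A.det / (A + vecMulVec x x).det * (x ⬝ᵥ (A⁻¹ *ᵥ m)) * e)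
        + (1 - A.det / (A + vecMulVec x x).det) * e ^ 2 := by
  have hgain := dotProduct_inv_add_vecMulVec_mulVec hB
  have hcross : m ⬝ᵥ ((A + vecMulVec x x)⁻¹ *ᵥ x) =
      A.det / (A + vecMulVec x x).det * (x ⬝ᵥ (A⁻¹ *ᵥ m)) := by
    have hsymmB : ((A + vecMulVec x x)⁻¹)ᵀ = (A + vecMulVec x x)⁻¹ := by
      rw [Matrix.transpose_nonsing_inv, Matrix.transpose_add, hsymm.eq, Matrix.transpose_vecMulVec]
    have hupdate := congrArg (x ⬝ᵥ ·) (inv_add_vecMulVec_mulVec_add_smul (y := x) m 0 hA hB)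
    simp only [zero_smul, add_zero, zero_sub, dotProduct_add, dotProduct_smul, hgain,
      smul_eq_mul] at hupdate
    rw [← hsymmB, Matrix.mulVec_transpose, dotProduct_comm, ← Matrix.dotProduct_mulVec, hupdate]
    ring
  rw [inv_add_vecMulVec_mulVec_add_smul m e hA hB, add_dotProduct, dotProduct_add, dotProduct_add,
    smul_dotProduct, smul_dotProduct, dotProduct_smul, dotProduct_smul, hcross, hgain]
  simp only [smul_eq_mul]
  ring

end RankOneUpdate

section Regression

variable {ι : Type*}

/-- The regularized Gram matrix `S + ∑_{k<n} φ_k φ_kᵗ` of the first `n` regressors: the paper's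
`S_{n-1}`, indexed so that `S` itself is the value at `n = 0`. -/
def regularizedGram (S : Matrix ι ι ℝ) (φ : ℕ → ι → ℝ) (n : ℕ) : Matrix ι ι ℝ :=
  S + ∑ k ∈ range n, vecMulVec (φ k) (φ k)

/-- The score `m + ∑_{k<n} e_k φ_k`: the paper's martingale `M_n`, started at `m = M_0`. The noise
`e_k` is the paper's `ε_{k+1}`. -/
def scoreVector (m : ι → ℝ) (φ : ℕ → ι → ℝ) (e : ℕ → ℝ) (n : ℕ) : ι → ℝ :=
  m + ∑ k ∈ range n, e k • φ k

variable {S : Matrix ι ι ℝ} {φ : ℕ → ι → ℝ} {m : ι → ℝ} {e : ℕ → ℝ}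

lemma regularizedGram_succ (n : ℕ) :
    regularizedGram S φ (n + 1) = regularizedGram S φ n + vecMulVec (φ n) (φ n) := by
  rw [regularizedGram, sum_range_succ, ← add_assoc, regularizedGram]

lemma scoreVector_succ (n : ℕ) :
    scoreVector m φ e (n + 1) = scoreVector m φ e n + e n • φ n := by
  rw [scoreVector, sum_range_succ, ← add_assoc, scoreVector]

lemma posDef_regularizedGram [Finite ι] (hS : S.PosDef) (n : ℕ) :
    (regularizedGram S φ n).PosDef := by
  induction n with
  | zero => simpa [regularizedGram] using hS
  | succ n ih =>
    rw [regularizedGram_succ]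
    exact ih.add_posSemidef (by simpa using posSemidef_vecMulVec_self_star (φ n))

variable [Fintype ι]

lemma trace_regularizedGram_succ (n : ℕ) :
    (regularizedGram S φ (n + 1)).trace = (regularizedGram S φ n).trace + φ n ⬝ᵥ φ n := by
  rw [regularizedGram_succ, Matrix.trace_add, Matrix.trace_vecMulVec]

lemma dotProduct_self_nonneg (x : ι → ℝ) : 0 ≤ x ⬝ᵥ x := by
  simpa using dotProduct_star_self_nonneg x

lemma monotone_trace_regularizedGram : Monotone fun n => (regularizedGram S φ n).trace :=
  monotone_nat_of_le_succ fun n => by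
    rw [trace_regularizedGram_succ]
    exact le_add_of_nonneg_right (dotProduct_self_nonneg _)

lemma trace_regularizedGram_pos [Nonempty ι] (hS : S.PosDef) (n : ℕ) :
    0 < (regularizedGram S φ n).trace :=
  (posDef_regularizedGram hS n).trace_pos

/-- The crude energy `‖M_n‖² / tr S_{n-1}`, in which the trace replaces the matrix `S_{n-1}` of
`scoreEnergy`. -/
def traceEnergy (S : Matrix ι ι ℝ) (m : ι → ℝ) (φ : ℕ → ι → ℝ) (e : ℕ → ℝ) (n : ℕ) : ℝ :=
  scoreVector m φ e n ⬝ᵥ scoreVector m φ e n / (regularizedGram S φ n).trace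

lemma traceEnergy_nonneg [Nonempty ι] (hS : S.PosDef) (n : ℕ) : 0 ≤ traceEnergy S m φ e n :=
  div_nonneg (dotProduct_self_nonneg _) (trace_regularizedGram_pos hS n).le

lemma traceEnergy_succ [Nonempty ι] (hS : S.PosDef) (n : ℕ) :
    traceEnergy S m φ e (n + 1)
        + (1 - (regularizedGram S φ n).trace / (regularizedGram S φ (n + 1)).trace)
          * traceEnergy S m φ e n =
      traceEnergy S m φ e n
        + 2 * (φ n ⬝ᵥ scoreVector m φ e n / (regularizedGram S φ (n + 1)).trace * e n)
        + (1 - (regularizedGram S φ n).trace / (regularizedGram S φ (n + 1)).trace) * e n ^ 2 := by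
  have htrace := trace_regularizedGram_pos (φ := φ) hS n
  have htrace' := trace_regularizedGram_pos (φ := φ) hS (n + 1)
  simp only [traceEnergy]
  rw [trace_regularizedGram_succ] at htrace' ⊢
  simp only [scoreVector_succ, add_dotProduct, dotProduct_add, smul_dotProduct, dotProduct_smul,
    smul_eq_mul, dotProduct_comm (scoreVector m φ e n) (φ n)]
  field_simp
  ring

lemma sq_dotProduct_le (x y : ι → ℝ) : (x ⬝ᵥ y) ^ 2 ≤ (x ⬝ᵥ x) * (y ⬝ᵥ y) := by
  simpa only [dotProduct, sq] using sum_mul_sq_le_sq_mul_sq univ x y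

lemma sq_dotProduct_div_trace_le [Nonempty ι] (hS : S.PosDef) (n : ℕ) :
    (φ n ⬝ᵥ scoreVector m φ e n / (regularizedGram S φ (n + 1)).trace) ^ 2 ≤
      (1 - (regularizedGram S φ n).trace / (regularizedGram S φ (n + 1)).trace)
        * traceEnergy S m φ e n := by
  have htrace := trace_regularizedGram_pos (φ := φ) hS n
  have htrace' := trace_regularizedGram_pos (φ := φ) hS (n + 1)
  have hmono : (regularizedGram S φ n).trace ≤ (regularizedGram S φ (n + 1)).trace :=
    monotone_trace_regularizedGram n.le_succ
  have hratio : 1 - (regularizedGram S φ n).trace / (regularizedGram S φ (n + 1)).trace =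
      φ n ⬝ᵥ φ n / (regularizedGram S φ (n + 1)).trace := by
    rw [one_sub_div htrace'.ne', trace_regularizedGram_succ, add_sub_cancel_left]
  rw [traceEnergy, hratio, div_pow, div_mul_div_comm, sq (regularizedGram S φ (n + 1)).trace]
  exact div_le_div₀ (mul_nonneg (dotProduct_self_nonneg _) (dotProduct_self_nonneg _))
    (sq_dotProduct_le _ _) (mul_pos htrace' htrace) (by gcongr)

variable [DecidableEq ι]

/-- The error `(θ̂_n - θ)ᵗ φ_n` of the least squares prediction, written through
`θ̂_n - θ = S_{n-1}⁻¹ M_n`. -/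
def predictionError (S : Matrix ι ι ℝ) (m : ι → ℝ) (φ : ℕ → ι → ℝ) (e : ℕ → ℝ) (n : ℕ) : ℝ :=
  φ n ⬝ᵥ ((regularizedGram S φ n)⁻¹ *ᵥ scoreVector m φ e n)

/-- The energy `M_nᵗ S_{n-1}⁻¹ M_n` of the score. -/
def scoreEnergy (S : Matrix ι ι ℝ) (m : ι → ℝ) (φ : ℕ → ι → ℝ) (e : ℕ → ℝ) (n : ℕ) : ℝ :=
  scoreVector m φ e n ⬝ᵥ ((regularizedGram S φ n)⁻¹ *ᵥ scoreVector m φ e n)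

lemma isUnit_det_regularizedGram (hS : S.PosDef) (n : ℕ) : IsUnit (regularizedGram S φ n).det :=
  (posDef_regularizedGram hS n).det_pos.ne'.isUnit

lemma det_regularizedGram_pos (hS : S.PosDef) (n : ℕ) : 0 < (regularizedGram S φ n).det :=
  (posDef_regularizedGram hS n).det_pos

lemma one_sub_det_regularizedGram_div (hS : S.PosDef) (n : ℕ) :
    1 - (regularizedGram S φ n).det / (regularizedGram S φ (n + 1)).det =
      φ n ⬝ᵥ ((regularizedGram S φ (n + 1))⁻¹ *ᵥ φ n) := by
  have hunit := isUnit_det_regularizedGram (φ := φ) hS (n + 1)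
  rw [regularizedGram_succ] at hunit ⊢
  exact (dotProduct_inv_add_vecMulVec_mulVec hunit).symm

lemma monotone_det_regularizedGram (hS : S.PosDef) :
    Monotone fun n => (regularizedGram S φ n).det := by
  refine monotone_nat_of_le_succ fun n => ?_
  rw [← div_le_one (det_regularizedGram_pos hS _), ← sub_nonneg, one_sub_det_regularizedGram_div hS]
  simpa using (posDef_regularizedGram hS (n + 1)).inv.posSemidef.dotProduct_mulVec_nonneg (φ n)

lemma scoreEnergy_nonneg (hS : S.PosDef) (n : ℕ) : 0 ≤ scoreEnergy S m φ e n := by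
  rw [scoreEnergy]
  simpa using (posDef_regularizedGram hS n).inv.posSemidef.dotProduct_mulVec_nonneg
    (scoreVector m φ e n)

lemma scoreEnergy_succ (hS : S.PosDef) (n : ℕ) :
    scoreEnergy S m φ e (n + 1)
        + (regularizedGram S φ n).det / (regularizedGram S φ (n + 1)).det
          * predictionError S m φ e n ^ 2 =
      scoreEnergy S m φ e n
        + 2 * ((regularizedGram S φ n).det / (regularizedGram S φ (n + 1)).det
          * predictionError S m φ e n * e n)
        + (1 - (regularizedGram S φ n).det / (regularizedGram S φ (n + 1)).det) * e n ^ 2 := by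
  have hunit := isUnit_det_regularizedGram (φ := φ) hS (n + 1)
  rw [regularizedGram_succ] at hunit
  have hsymm : (regularizedGram S φ n).IsSymm :=
    Matrix.isHermitian_iff_isSymm.1 (posDef_regularizedGram hS n).isHermitian
  rw [scoreEnergy, scoreVector_succ, regularizedGram_succ]
  exact dotProduct_inv_add_vecMulVec_self_mulVec _ _ hsymm (isUnit_det_regularizedGram hS n) hunit

end Regression

section NormalizedLimit

variable {ι : Type*} [Fintype ι] {A : ℕ → Matrix ι ι ℝ} {L : Matrix ι ι ℝ} {s : ℕ → ℝ}

lemma tendsto_trace_atTop (hs : Tendsto s atTop atTop)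
    (hA : Tendsto (fun n => (s n)⁻¹ • A n) atTop (𝓝 L)) (hL : 0 < L.trace) :
    Tendsto (fun n => (A n).trace) atTop atTop := by
  have hlim : Tendsto (fun n => ((s n)⁻¹ • A n).trace) atTop (𝓝 L.trace) :=
    ((continuous_id.matrix_trace).tendsto L).comp hA
  refine (hs.atTop_mul_pos hL hlim).congr' ?_
  filter_upwards [hs.eventually_ne_atTop 0] with n hn
  rw [Matrix.trace_smul, smul_eq_mul, mul_inv_cancel_left₀ hn]

lemma tendsto_inv_trace_smul (hs : Tendsto s atTop atTop)
    (hA : Tendsto (fun n => (s n)⁻¹ • A n) atTop (𝓝 L)) (hL : L.trace ≠ 0) :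
    Tendsto (fun n => (A n).trace⁻¹ • A n) atTop (𝓝 (L.trace⁻¹ • L)) := by
  have hlim : Tendsto (fun n => ((s n)⁻¹ • A n).trace) atTop (𝓝 L.trace) :=
    ((continuous_id.matrix_trace).tendsto L).comp hA
  refine ((hlim.inv₀ hL).smul hA).congr' ?_
  filter_upwards [hs.eventually_ne_atTop 0] with n hn
  rw [Matrix.trace_smul, smul_smul, smul_eq_mul, _root_.mul_inv_rev, inv_inv, mul_assoc,
    mul_inv_cancel₀ hn, mul_one]

lemma isBigO_dotProduct_mulVec {B : ℕ → Matrix ι ι ℝ} (x : ℕ → ι → ℝ)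
    (hB : Tendsto B atTop (𝓝 L)) :
    (fun n => x n ⬝ᵥ (B n *ᵥ x n)) =O[atTop] fun n => x n ⬝ᵥ x n := by
  have hcoord (i j : ι) : (fun n => x n i * x n j) =O[atTop] fun n => x n ⬝ᵥ x n := by
    refine Asymptotics.isBigO_of_le _ fun n => ?_
    have hsq (k : ι) : x n k ^ 2 ≤ x n ⬝ᵥ x n := by
      rw [sq]
      exact single_le_sum (f := fun k => x n k * x n k) (fun k _ => mul_self_nonneg _) (mem_univ k)
    rw [Real.norm_of_nonneg (dotProduct_self_nonneg _), Real.norm_eq_abs, abs_le]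
    constructor <;> nlinarith [hsq i, hsq j, sq_nonneg (x n i - x n j), sq_nonneg (x n i + x n j)]
  have hentry (i j : ι) : (fun n => B n i j) =O[atTop] fun _ => (1 : ℝ) :=
    (tendsto_pi_nhds.1 (tendsto_pi_nhds.1 hB i) j).isBigO_one ℝ
  have hterm (i j : ι) : (fun n => x n i * (B n i j * x n j)) =O[atTop] fun n => x n ⬝ᵥ x n :=
    ((hentry i j).mul (hcoord i j)).congr (fun n => by ring) fun n => one_mul _
  simp only [dotProduct, Matrix.mulVec, mul_sum]
  exact Asymptotics.IsBigO.fun_sum fun i _ => Asymptotics.IsBigO.fun_sum fun j _ => hterm i j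

variable [DecidableEq ι]

lemma tendsto_det_inv_smul (hA : Tendsto (fun n => (s n)⁻¹ • A n) atTop (𝓝 L)) :
    Tendsto (fun n => ((s n)⁻¹ • A n).det) atTop (𝓝 L.det) :=
  ((continuous_id.matrix_det).tendsto L).comp hA

lemma isBigO_dotProduct_inv_mulVec (x : ℕ → ι → ℝ) (hs : ∀ᶠ n in atTop, s n ≠ 0)
    (hA : Tendsto (fun n => (s n)⁻¹ • A n) atTop (𝓝 L)) (hL : L.det ≠ 0) :
    (fun n => x n ⬝ᵥ ((A n)⁻¹ *ᵥ x n)) =O[atTop] fun n => x n ⬝ᵥ x n / s n := by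
  have hinv : Tendsto (fun n => ((s n)⁻¹ • A n)⁻¹) atTop (𝓝 L⁻¹) := by
    refine (continuousAt_matrix_inv L ?_).tendsto.comp hA
    rw [Ring.inverse_eq_inv']
    exact continuousAt_inv₀ hL
  refine ((isBigO_dotProduct_mulVec x hinv).mul (Asymptotics.isBigO_refl (fun n => (s n)⁻¹)
    atTop)).congr' ?_ (Eventually.of_forall fun n => (div_eq_mul_inv _ _).symm)
  filter_upwards [hs, (tendsto_det_inv_smul hA).eventually_ne hL] with n hn hdet
  have hscale : (A n)⁻¹ = (s n)⁻¹ • ((s n)⁻¹ • A n)⁻¹ := by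
    have := invertibleOfNonzero hn
    rw [← invOf_eq_inv (s n), ← Matrix.inv_smul _ _ (invOf_eq_inv (s n) ▸ hdet.isUnit),
      smul_smul, mul_invOf_self, one_smul]
  rw [hscale, Matrix.smul_mulVec, dotProduct_smul, smul_eq_mul, mul_comm]

lemma tendsto_det_atTop [Nonempty ι] (hs : Tendsto s atTop atTop)
    (hA : Tendsto (fun n => (s n)⁻¹ • A n) atTop (𝓝 L)) (hL : 0 < L.det) :
    Tendsto (fun n => (A n).det) atTop atTop := by
  refine (((tendsto_pow_atTop (Fintype.card_ne_zero (α := ι))).comp hs).atTop_mul_pos hL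
    (tendsto_det_inv_smul hA)).congr' ?_
  filter_upwards [hs.eventually_ne_atTop 0] with n hn
  rw [Matrix.det_smul, inv_pow]
  exact mul_inv_cancel_left₀ (pow_ne_zero _ hn) _

lemma isBigO_log_log_det [Nonempty ι] (hs : Tendsto s atTop atTop)
    (hA : Tendsto (fun n => (s n)⁻¹ • A n) atTop (𝓝 L)) (hL : 0 < L.det) :
    (fun n => Real.log (s n)) =O[atTop] fun n => Real.log (A n).det := by
  have hdet := tendsto_det_inv_smul hA
  have hcard : (Fintype.card ι : ℝ) ≠ 0 := Nat.cast_ne_zero.2 Fintype.card_ne_zero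
  have hrest : (fun n => Real.log ((s n)⁻¹ • A n).det) =O[atTop] fun n => Real.log (A n).det :=
    ((hdet.log hL.ne').isBigO_one ℝ).trans (const_isLittleO_of_tendsto_atTop
      (Real.tendsto_log_atTop.comp (tendsto_det_atTop hs hA hL)) 1).isBigO
  refine (((Asymptotics.isBigO_refl _ _).sub hrest).const_mul_left
    (Fintype.card ι : ℝ)⁻¹).congr' ?_ .rfl
  filter_upwards [hs.eventually_ne_atTop 0,
    (tendsto_det_atTop hs hA hL).eventually_ne_atTop 0] with n hn hdetn
  rw [Matrix.det_smul, Real.log_mul (pow_ne_zero _ (inv_ne_zero hn)) hdetn, Real.log_pow,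
    Real.log_inv]
  field_simp
  ring

end NormalizedLimit

lemma isLittleO_scoreEnergy_log_det {ι : Type*} [Fintype ι] [DecidableEq ι] [Nonempty ι]
    {S L : Matrix ι ι ℝ} {m : ι → ℝ} {φ : ℕ → ι → ℝ} {e s : ℕ → ℝ} (hL : L.PosDef)
    (hs : Tendsto s atTop atTop)
    (hconv : Tendsto (fun n => (s n)⁻¹ • regularizedGram S φ n) atTop (𝓝 L))
    (hscore : traceEnergy S m φ e =o[atTop] fun n => Real.log (regularizedGram S φ n).trace) :
    scoreEnergy S m φ e =o[atTop] fun n => Real.log (regularizedGram S φ n).det := by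
  have htop := tendsto_trace_atTop hs hconv hL.trace_pos
  have hconv' := tendsto_inv_trace_smul hs hconv hL.trace_pos.ne'
  have hdet : 0 < (L.trace⁻¹ • L).det := (hL.smul (inv_pos.2 hL.trace_pos)).det_pos
  have henergy := isBigO_dotProduct_inv_mulVec (scoreVector m φ e) (htop.eventually_ne_atTop 0)
    hconv' hdet.ne'
  exact (henergy.trans_isLittleO hscore).trans_isBigO (isBigO_log_log_det htop hconv' hdet)

section RegressionMartingale

variable {Ω : Type*} {m0 : MeasurableSpace Ω} {μ : Measure Ω} [IsFiniteMeasure μ]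
  {F : Filtration ℕ m0} {ι : Type*} {p v : ℝ}
  {S : Matrix ι ι ℝ} {m : ι → ℝ} {Φ : ℕ → Ω → ι → ℝ} {e : ℕ → Ω → ℝ}

lemma isStronglyPredictable_regularizedGram (hΦ : StronglyAdapted F Φ) :
    IsStronglyPredictable F fun n ω => regularizedGram S (Φ · ω) n := by
  refine IsStronglyPredictable.of_measurable_add_one ?_ fun n => ?_
  · simpa [regularizedGram] using stronglyMeasurable_const
  · refine stronglyMeasurable_const.add (Finset.stronglyMeasurable_fun_sum _ fun k hk => ?_)
    exact (continuous_id.matrix_vecMulVec continuous_id).comp_stronglyMeasurable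
      ((hΦ k).mono (F.mono (Nat.lt_succ_iff.1 (mem_range.1 hk))))

lemma stronglyAdapted_scoreVector (hΦ : StronglyAdapted F Φ)
    (he : ∀ n, StronglyMeasurable[F (n + 1)] (e n)) :
    StronglyAdapted F fun n ω => scoreVector m (Φ · ω) (e · ω) n := fun _ =>
  stronglyMeasurable_const.add (Finset.stronglyMeasurable_fun_sum _ fun k hk =>
    ((he k).mono (F.mono (mem_range.1 hk))).smul ((hΦ k).mono (F.mono (mem_range.1 hk).le)))

variable [Fintype ι]

lemma isStronglyPredictable_trace_regularizedGram (hΦ : StronglyAdapted F Φ) :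
    IsStronglyPredictable F fun n ω => (regularizedGram S (Φ · ω) n).trace :=
  continuous_id.matrix_trace.comp_stronglyMeasurable (isStronglyPredictable_regularizedGram hΦ)

lemma stronglyMeasurable_dotProduct {x y : Ω → ι → ℝ} (hx : StronglyMeasurable x)
    (hy : StronglyMeasurable y) : StronglyMeasurable fun ω => x ω ⬝ᵥ y ω :=
  (continuous_fst.dotProduct continuous_snd).comp_stronglyMeasurable (hx.prodMk hy)

theorem isLittleO_traceEnergy_log_trace [Nonempty ι] (hS : S.PosDef)
    (hΦ : StronglyAdapted F Φ) (he : IsBoundedMartingaleDiff F e 2 μ)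
    (hsq : IsBoundedMartingaleDiff F (fun n ω => e n ω ^ 2 - v) p μ) (hp1 : 1 < p) (hp2 : p ≤ 2) :
    ∀ᵐ ω ∂μ, Tendsto (fun n => (regularizedGram S (Φ · ω) n).trace) atTop atTop →
      traceEnergy S m (Φ · ω) (e · ω) =o[atTop]
        fun n => Real.log (regularizedGram S (Φ · ω) n).trace := by
  have htrace := isStronglyPredictable_trace_regularizedGram (S := S) hΦ
  have hpos (n : ℕ) (ω : Ω) := trace_regularizedGram_pos (φ := (Φ · ω)) hS n
  have hmono (ω : Ω) := monotone_trace_regularizedGram (S := S) (φ := (Φ · ω))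
  have hu : StronglyAdapted F fun n ω =>
      Φ n ω ⬝ᵥ scoreVector m (Φ · ω) (e · ω) n / (regularizedGram S (Φ · ω) (n + 1)).trace :=
    fun n => (stronglyMeasurable_dotProduct (hΦ n)
      (stronglyAdapted_scoreVector hΦ he.stronglyMeasurable n)).div (htrace.measurable_add_one n)
  filter_upwards [he.isLittleO_log_of_lyapunov hsq hp1 hp2 htrace hpos hmono hu
    (V := fun n ω => traceEnergy S m (Φ · ω) (e · ω) n)
    (r := fun n ω => (1 - (regularizedGram S (Φ · ω) n).trace
      / (regularizedGram S (Φ · ω) (n + 1)).trace) * traceEnergy S m (Φ · ω) (e · ω) n)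
    (fun n ω => traceEnergy_nonneg hS n)
    (fun n ω => sq_dotProduct_div_trace_le (φ := (Φ · ω)) (e := (e · ω)) hS n)
    (fun n ω => traceEnergy_succ (φ := (Φ · ω)) (e := (e · ω)) hS n)] with ω hω htop
  exact isLittleO_log_of_isLittleO_add_sum (hpos · ω) (hmono ω) htop (hω htop)

variable [DecidableEq ι]

lemma isStronglyPredictable_det_regularizedGram (hΦ : StronglyAdapted F Φ) :
    IsStronglyPredictable F fun n ω => (regularizedGram S (Φ · ω) n).det :=
  continuous_id.matrix_det.comp_stronglyMeasurable (isStronglyPredictable_regularizedGram hΦ)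

lemma stronglyMeasurable_matrix_inv {A : Ω → Matrix ι ι ℝ} (hA : StronglyMeasurable A) :
    StronglyMeasurable fun ω => (A ω)⁻¹ := by
  simp_rw [Matrix.inv_def, Ring.inverse_eq_inv']
  exact (continuous_id.matrix_det.comp_stronglyMeasurable hA).inv₀.smul
    (continuous_id.matrix_adjugate.comp_stronglyMeasurable hA)

lemma stronglyAdapted_predictionError (hΦ : StronglyAdapted F Φ)
    (he : ∀ n, StronglyMeasurable[F (n + 1)] (e n)) :
    StronglyAdapted F fun n ω => predictionError S m (Φ · ω) (e · ω) n := fun n =>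
  stronglyMeasurable_dotProduct (hΦ n)
    ((continuous_fst.matrix_mulVec continuous_snd).comp_stronglyMeasurable
      ((stronglyMeasurable_matrix_inv
        ((isStronglyPredictable_regularizedGram hΦ).stronglyAdapted n)).prodMk
        (stronglyAdapted_scoreVector hΦ he n)))

theorem isLittleO_scoreEnergy_add_sum_sq_predictionError (hS : S.PosDef)
    (hΦ : StronglyAdapted F Φ) (he : IsBoundedMartingaleDiff F e 2 μ)
    (hsq : IsBoundedMartingaleDiff F (fun n ω => e n ω ^ 2 - v) p μ) (hp1 : 1 < p) (hp2 : p ≤ 2) :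
    ∀ᵐ ω ∂μ, Tendsto (fun n => (regularizedGram S (Φ · ω) n).det) atTop atTop →
      (fun n => scoreEnergy S m (Φ · ω) (e · ω) n
        + ∑ k ∈ range n, (regularizedGram S (Φ · ω) k).det / (regularizedGram S (Φ · ω) (k + 1)).det
          * predictionError S m (Φ · ω) (e · ω) k ^ 2
        - v * ∑ k ∈ range n, (1 - (regularizedGram S (Φ · ω) k).det
          / (regularizedGram S (Φ · ω) (k + 1)).det)) =o[atTop]
        fun n => Real.log (regularizedGram S (Φ · ω) n).det := by
  have hdet := isStronglyPredictable_det_regularizedGram (S := S) hΦ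
  have hpos (n : ℕ) (ω : Ω) := det_regularizedGram_pos (φ := (Φ · ω)) hS n
  have hmono (ω : Ω) := monotone_det_regularizedGram (φ := (Φ · ω)) hS
  have hu : StronglyAdapted F fun n ω =>
      (regularizedGram S (Φ · ω) n).det / (regularizedGram S (Φ · ω) (n + 1)).det
        * predictionError S m (Φ · ω) (e · ω) n := fun n =>
    ((hdet.stronglyAdapted n).div (hdet.measurable_add_one n)).mul
      (stronglyAdapted_predictionError hΦ he.stronglyMeasurable n)
  refine he.isLittleO_log_of_lyapunov hsq hp1 hp2 hdet hpos hmono hu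
    (V := fun n ω => scoreEnergy S m (Φ · ω) (e · ω) n)
    (r := fun n ω => (regularizedGram S (Φ · ω) n).det / (regularizedGram S (Φ · ω) (n + 1)).det
      * predictionError S m (Φ · ω) (e · ω) n ^ 2)
    (fun n ω => scoreEnergy_nonneg hS n) (fun n ω => ?_)
    fun n ω => scoreEnergy_succ (φ := (Φ · ω)) (e := (e · ω)) hS n
  have hratio0 := (div_pos (hpos n ω) (hpos (n + 1) ω)).le
  have hratio1 := (div_le_one (hpos (n + 1) ω)).2 (hmono ω n.le_succ)
  rw [mul_pow]
  gcongr
  exact pow_le_of_le_one hratio0 hratio1 two_ne_zero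

theorem tendsto_sum_sq_predictionError_sub_div_log_det [Nonempty ι] (hS : S.PosDef)
    (hΦ : StronglyAdapted F Φ) (he : IsBoundedMartingaleDiff F e 2 μ)
    (hsq : IsBoundedMartingaleDiff F (fun n ω => e n ω ^ 2 - v) p μ) (hp1 : 1 < p) (hp2 : p ≤ 2)
    (hconv : ∀ᵐ ω ∂μ, ∃ (s : ℕ → ℝ) (L : Matrix ι ι ℝ), L.PosDef ∧ Tendsto s atTop atTop ∧
      Tendsto (fun n => (s n)⁻¹ • regularizedGram S (Φ · ω) n) atTop (𝓝 L))
    (hratio : ∀ᵐ ω ∂μ, Tendsto (fun n => 1 - (regularizedGram S (Φ · ω) n).det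
      / (regularizedGram S (Φ · ω) (n + 1)).det) atTop (𝓝 0)) :
    ∀ᵐ ω ∂μ, Tendsto (fun n => (∑ k ∈ range n, (predictionError S m (Φ · ω) (e · ω) k ^ 2
        - 2 * (predictionError S m (Φ · ω) (e · ω) k * e k ω)))
      / Real.log (regularizedGram S (Φ · ω) (n + 1)).det) atTop (𝓝 v) := by
  have hpos (n : ℕ) (ω : Ω) := det_regularizedGram_pos (φ := (Φ · ω)) hS n
  have hmono (ω : Ω) := monotone_det_regularizedGram (φ := (Φ · ω)) hS
  filter_upwards [hconv, hratio, isLittleO_traceEnergy_log_trace (m := m) hS hΦ he hsq hp1 hp2,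
    isLittleO_scoreEnergy_add_sum_sq_predictionError (m := m) hS hΦ he hsq hp1 hp2,
    he.isLittleO_sum_mul_lyapunovClock (isStronglyPredictable_det_regularizedGram hΦ) hpos hmono
      (stronglyAdapted_predictionError (S := S) (m := m) hΦ he.stronglyMeasurable)]
    with ω ⟨s, L, hL, hs, hsL⟩ hω htrace henergy hlin
  have htop := tendsto_det_atTop hs hsL hL.det_pos
  have hscore := isLittleO_scoreEnergy_log_det hL hs hsL
    (htrace (tendsto_trace_atTop hs hsL hL.trace_pos))
  exact tendsto_sum_sq_sub_div_log (hpos · ω) hω htop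
    (isLittleO_sum_sq_sub_log (hpos · ω) (hmono ω) hω htop hscore (henergy htop)) (hlin htop)

end RegressionMartingale

section LeastSquares

variable {Ω : Type*} {d : ℕ} {S : Matrix (Fin d) (Fin d) ℝ} {Φ : ℕ → Ω → Fin d → ℝ}
  {X ε : ℕ → Ω → ℝ} {θ : Fin d → ℝ}

lemma Smat_eq_regularizedGram (n : ℕ) (ω : Ω) :
    Smat S Φ n ω = regularizedGram S (Φ · ω) (n + 1) := rfl

lemma expl_eq_one_sub_det_div (hS : S.PosDef) (n : ℕ) (ω : Ω) : expl S Φ n ω =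
    1 - (regularizedGram S (Φ · ω) n).det / (regularizedGram S (Φ · ω) (n + 1)).det :=
  (one_sub_det_regularizedGram_div (φ := (Φ · ω)) hS n).symm

lemma sum_smul_eq_regularizedGram_mulVec_add_scoreVector
    (hmodel : ∀ n ω, X (n + 1) ω = θ ⬝ᵥ Φ n ω + ε (n + 1) ω) (n : ℕ) (ω : Ω) :
    ∑ k ∈ Icc 1 n, X k ω • Φ (k - 1) ω = regularizedGram S (Φ · ω) n *ᵥ θ
      + scoreVector (-(S *ᵥ θ)) (Φ · ω) (fun k => ε (k + 1) ω) n := by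
  induction n with
  | zero => simp [regularizedGram, scoreVector]
  | succ n ih =>
    rw [sum_Icc_succ_top n.succ_pos, ih, regularizedGram_succ, scoreVector_succ, Matrix.add_mulVec,
      Matrix.vecMulVec_mulVec, hmodel, add_smul, dotProduct_comm θ, op_smul_eq_smul,
      Nat.add_sub_cancel]
    abel

lemma lsq_eq_add_inv_mulVec_scoreVector (hS : S.PosDef)
    (hmodel : ∀ n ω, X (n + 1) ω = θ ⬝ᵥ Φ n ω + ε (n + 1) ω) (n : ℕ) (ω : Ω) :
    lsq S Φ X n ω = θ + (regularizedGram S (Φ · ω) n)⁻¹ *ᵥ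
      scoreVector (-(S *ᵥ θ)) (Φ · ω) (fun k => ε (k + 1) ω) n := by
  have hnormal : lsq S Φ X n ω =
      (regularizedGram S (Φ · ω) n)⁻¹ *ᵥ ∑ k ∈ Icc 1 n, X k ω • Φ (k - 1) ω := by
    cases n with
    -- For `n = 0` the truncated index gives the inverse of `S_0` instead of `S_{-1} = S`, but the
    -- sum is empty.
    | zero => simp [lsq]
    | succ n => rfl
  rw [hnormal, sum_smul_eq_regularizedGram_mulVec_add_scoreVector hmodel, Matrix.mulVec_add,
    Matrix.mulVec_mulVec, Matrix.nonsing_inv_mul _ (isUnit_det_regularizedGram hS n),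
    Matrix.one_mulVec]

lemma sub_lsq_dotProduct (hS : S.PosDef)
    (hmodel : ∀ n ω, X (n + 1) ω = θ ⬝ᵥ Φ n ω + ε (n + 1) ω) (n : ℕ) (ω : Ω) :
    X (n + 1) ω - lsq S Φ X n ω ⬝ᵥ Φ n ω = ε (n + 1) ω
      - predictionError S (-(S *ᵥ θ)) (Φ · ω) (fun k => ε (k + 1) ω) n := by
  rw [lsq_eq_add_inv_mulVec_scoreVector hS hmodel, hmodel, add_dotProduct, predictionError,
    dotProduct_comm (Φ n ω)]
  ring

lemma sum_sq_residual_sub_sum_sq_noise (hS : S.PosDef)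
    (hmodel : ∀ n ω, X (n + 1) ω = θ ⬝ᵥ Φ n ω + ε (n + 1) ω) (n : ℕ) (ω : Ω) :
    ∑ k ∈ range n, (X (k + 1) ω - lsq S Φ X k ω ⬝ᵥ Φ k ω) ^ 2 - ∑ k ∈ Icc 1 n, ε k ω ^ 2 =
      ∑ k ∈ range n, (predictionError S (-(S *ᵥ θ)) (Φ · ω) (fun k => ε (k + 1) ω) k ^ 2
        - 2 * (predictionError S (-(S *ᵥ θ)) (Φ · ω) (fun k => ε (k + 1) ω) k * ε (k + 1) ω)) := by
  have hshift : ∑ k ∈ Icc 1 n, ε k ω ^ 2 = ∑ k ∈ range n, ε (k + 1) ω ^ 2 := by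
    rw [range_eq_Ico, sum_Ico_add' (fun k => ε k ω ^ 2) 0 n 1]
    rfl
  rw [hshift, ← sum_sub_distrib]
  refine sum_congr rfl fun k _ => ?_
  rw [sub_lsq_dotProduct hS hmodel]
  ring

end LeastSquares

theorem residual_variance_estimation_general
    {Ω : Type*} {m0 : MeasurableSpace Ω} {μ : Measure Ω} [IsFiniteMeasure μ]
    (F : Filtration ℕ m0) {d : ℕ} (hd : 0 < d)
    (ε : ℕ → Ω → ℝ) (Φ : ℕ → Ω → Fin d → ℝ) (X : ℕ → Ω → ℝ) (θ : Fin d → ℝ)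
    (S : Matrix (Fin d) (Fin d) ℝ) (hS : S.PosDef) (v a : ℝ) (ha : 2 < a)
    (hmodel : ∀ n ω, X (n + 1) ω = θ ⬝ᵥ Φ n ω + ε (n + 1) ω)
    (hΦ : StronglyAdapted F Φ)
    (hε : IsBoundedMartingaleDiff F (fun n => ε (n + 1)) a μ)
    (hvar : ∀ n, μ[fun ω => ε (n + 1) ω ^ 2 | F n] =ᵐ[μ] fun _ => v)
    (hf0 : ∀ᵐ ω ∂μ, Tendsto (fun n => expl S Φ n ω) atTop (𝓝 0))
    (hconv : ∀ᵐ ω ∂μ, ∃ (α : ℕ → ℝ) (L : Matrix (Fin d) (Fin d) ℝ), L.PosDef ∧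
      Tendsto α atTop atTop ∧ Tendsto (fun n => (α n)⁻¹ • Smat S Φ n ω) atTop (𝓝 L)) :
    let Γ : ℕ → Ω → ℝ := fun n ω =>
      (n : ℝ)⁻¹ * ∑ k ∈ range n, (X (k + 1) ω - lsq S Φ X k ω ⬝ᵥ Φ k ω) ^ 2
    let Δ : ℕ → Ω → ℝ := fun n ω => (n : ℝ)⁻¹ * ∑ k ∈ Icc 1 n, ε k ω ^ 2
    ∀ᵐ ω ∂μ, Tendsto (fun n : ℕ =>
      (n : ℝ) / Real.log (Smat S Φ n ω).det * (Γ n ω - Δ n ω)) atTop (𝓝 v) := by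
  have : Nonempty (Fin d) := ⟨⟨0, hd⟩⟩
  have hsq := (hε.sq_sub_const ha.le hvar).mono_exponent (q := min (a / 2) 2) (by positivity)
    (min_le_left _ _)
  have hp : 1 < min (a / 2) 2 := lt_min (by linarith) one_lt_two
  have hgram : ∀ᵐ ω ∂μ, ∃ (s : ℕ → ℝ) (L : Matrix (Fin d) (Fin d) ℝ), L.PosDef ∧
      Tendsto s atTop atTop ∧
      Tendsto (fun n => (s n)⁻¹ • regularizedGram S (Φ · ω) n) atTop (𝓝 L) := by
    filter_upwards [hconv] with ω ⟨α, L, hL, hα, hαL⟩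
    exact ⟨fun n => α (n - 1), L, hL, hα.comp (tendsto_sub_atTop_nat 1),
      (tendsto_add_atTop_iff_nat 1).1 hαL⟩
  simp_rw [expl_eq_one_sub_det_div hS] at hf0
  filter_upwards [tendsto_sum_sq_predictionError_sub_div_log_det (m := -(S *ᵥ θ)) hS hΦ
    (hε.mono_exponent zero_le_two ha.le) hsq hp (min_le_right _ _) hgram hf0] with ω hω
  refine hω.congr' ?_
  filter_upwards [eventually_ne_atTop 0] with n hn
  have hn' : (n : ℝ) ≠ 0 := Nat.cast_ne_zero.2 hn
  rw [← sum_sq_residual_sub_sum_sq_noise hS hmodel, ← mul_sub, Smat_eq_regularizedGram]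
  field_simp

/-- For the stochastic regression model `X_{n+1} = θᵗΦ_n + ε_{n+1}`, the residual variance
estimator satisfies `(n / log d_n)(Γ_n - Δ_n) → σ²` a.s. -/
theorem residual_variance_estimation
    {Ω : Type*} {m0 : MeasurableSpace Ω} {μ : Measure Ω} [IsProbabilityMeasure μ]
    (F : Filtration ℕ m0) {d : ℕ} (hd : 0 < d)
    (ε : ℕ → Ω → ℝ) (Φ : ℕ → Ω → Fin d → ℝ) (X : ℕ → Ω → ℝ) (θ : Fin d → ℝ)
    (S L : Matrix (Fin d) (Fin d) ℝ) (hS : S.PosDef) (hL : L.PosDef)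
    (σ : ℝ) (a : ℝ) (ha : 2 < a)
    (α : ℕ → Ω → ℝ)
    (hmodel : ∀ n ω, X (n + 1) ω = θ ⬝ᵥ Φ n ω + ε (n + 1) ω)
    (hεadapt : ∀ n, StronglyMeasurable[F n] (ε n))
    (hεint : ∀ n, Integrable (ε n) μ)
    (hΦadapt : ∀ n, StronglyMeasurable[F n] (Φ n))
    (hXadapt : ∀ n, StronglyMeasurable[F n] (X n))
    (hmds : ∀ n, μ[ε (n + 1)|F n] =ᵐ[μ] 0)
    (hvar : ∀ n, μ[fun ω => ε (n + 1) ω ^ 2|F n] =ᵐ[μ] fun _ => σ ^ 2)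
    (hmomint : ∀ n, Integrable (fun ω => |ε (n + 1) ω| ^ a) μ)
    (hmom : ∀ᵐ ω ∂μ, ∃ C : ℝ, ∀ n, (μ[fun ω => |ε (n + 1) ω| ^ a|F n]) ω ≤ C)
    (hf0 : ∀ᵐ ω ∂μ, Tendsto (fun n => expl S Φ n ω) atTop (𝓝 0))
    (hαmeas : ∀ n, Measurable (α n))
    (hαpos : ∀ n ω, 0 < α n ω)
    (hαmono : ∀ᵐ ω ∂μ, Monotone fun n => α n ω)
    (hαtop : ∀ᵐ ω ∂μ, Tendsto (fun n => α n ω) atTop atTop)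
    (hconv : ∀ᵐ ω ∂μ, Tendsto (fun n => (α n ω)⁻¹ • Smat S Φ n ω) atTop (𝓝 L)) :
    let Γ : ℕ → Ω → ℝ := fun n ω =>
      (n : ℝ)⁻¹ * ∑ k ∈ Finset.range n, (X (k + 1) ω - lsq S Φ X k ω ⬝ᵥ Φ k ω) ^ 2
    let Δ : ℕ → Ω → ℝ := fun n ω => (n : ℝ)⁻¹ * ∑ k ∈ Finset.Icc 1 n, ε k ω ^ 2
    ∀ᵐ ω ∂μ, Tendsto (fun n : ℕ =>
      (n : ℝ) / Real.log ((Smat S Φ n ω).det) * (Γ n ω - Δ n ω))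
      atTop (𝓝 (σ ^ 2)) := by
  exact residual_variance_estimation_general F hd ε Φ X θ S hS (σ ^ 2) a ha hmodel hΦadapt
    ⟨⟨fun n => hεadapt (n + 1), hmomint, hmds⟩, hmom⟩ hvar hf0
    (by filter_upwards [hαtop, hconv] with ω hω hωL using ⟨(α · ω), L, hL, hω, hωL⟩)
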